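/- arXiv:2102.00042 — 9 statements merged into one kernel-verified Lean document; each statement's English description precedes it below -/
import Mathlib

section
/- There exists a constant C > 0 (one may take C = 32) such that for every real number A > 0 and every real number δ with |δ| < 1/32, one has (1/2)·log(A) ≤ log(1 + (1/2 + δ)·(A − 1)) + C·δ². (Under these hypotheses 1 + (1/2 + δ)·(A − 1) > 0, so the logarithm is defined.) -/
/-!
With `p = 1/2 + δ`, the AM-GM inequality for `p A` and `1 - p` reads
`4 p (1 - p) A ≤ (1 + p (A - 1))²`, and `4 p (1 - p) = 1 - 4 δ²`. Taking logarithms, the error is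
at most `-log (1 - 4 δ²) / 2`, which is quadratic in `δ` as long as `δ` stays away from `±1/2`.
-/

theorem log_four_mul_mul_le_two_mul_log_add {a b : ℝ} (ha : 0 < a) (hb : 0 < b) :
    Real.log (4 * a * b) ≤ 2 * Real.log (a + b) :=
  calc Real.log (4 * a * b)
      ≤ Real.log ((a + b) ^ 2) := Real.log_le_log (by positivity) (four_mul_le_sq_add a b)
    _ = 2 * Real.log (a + b) := by rw [Real.log_pow, Nat.cast_ofNat]

theorem log_add_log_four_mul_mul_one_sub_le {A p : ℝ} (hA : 0 < A) (hp₀ : 0 < p) (hp₁ : p < 1) :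
    Real.log A + Real.log (4 * p * (1 - p)) ≤ 2 * Real.log (1 + p * (A - 1)) := by
  have hq : 0 < 1 - p := sub_pos.mpr hp₁
  calc Real.log A + Real.log (4 * p * (1 - p))
      = Real.log (4 * (p * A) * (1 - p)) := by
        rw [← Real.log_mul hA.ne' (by positivity)]
        ring_nf
    _ ≤ 2 * Real.log (p * A + (1 - p)) :=
        log_four_mul_mul_le_two_mul_log_add (mul_pos hp₀ hA) hq
    _ = 2 * Real.log (1 + p * (A - 1)) := by ring_nf

theorem neg_log_one_sub_le_div {x : ℝ} (hx : x < 1) : -Real.log (1 - x) ≤ x / (1 - x) := by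
  have hpos : 0 < 1 - x := sub_pos.mpr hx
  calc -Real.log (1 - x)
      ≤ (1 - x)⁻¹ - 1 := by linarith [Real.one_sub_inv_le_log_of_pos hpos]
    _ = x / (1 - x) := by
        field_simp
        ring

theorem neg_log_one_sub_le_div_of_le {x y : ℝ} (hx : 0 ≤ x) (hxy : x ≤ y) (hy : y < 1) :
    -Real.log (1 - x) ≤ x / (1 - y) :=
  (neg_log_one_sub_le_div (hxy.trans_lt hy)).trans <|
    div_le_div_of_nonneg_left hx (sub_pos.mpr hy) (sub_le_sub_left hxy 1)

theorem stmt_0_general {A δ r : ℝ} (hA : 0 < A) (hδ : |δ| ≤ r) (hr : r < 1 / 2) :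
    (1 / 2) * Real.log A ≤
      Real.log (1 + (1 / 2 + δ) * (A - 1)) + 2 / (1 - 4 * r ^ 2) * δ ^ 2 := by
  obtain ⟨hδ_lower, hδ_upper⟩ := abs_le.mp hδ
  have amgm : Real.log A + Real.log (1 - 4 * δ ^ 2) ≤
      2 * Real.log (1 + (1 / 2 + δ) * (A - 1)) := by
    convert log_add_log_four_mul_mul_one_sub_le hA (p := 1 / 2 + δ)
      (by linarith) (by linarith) using 3
    ring
  have error_le : -Real.log (1 - 4 * δ ^ 2) ≤ 4 * δ ^ 2 / (1 - 4 * r ^ 2) := by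
    have hδr : δ ^ 2 ≤ r ^ 2 := sq_le_sq' hδ_lower hδ_upper
    have hr_sq : r ^ 2 < (1 / 2) ^ 2 := pow_lt_pow_left₀ hr ((abs_nonneg δ).trans hδ) two_ne_zero
    exact neg_log_one_sub_le_div_of_le (by positivity) (by linarith) (by linarith)
  have double : 4 * δ ^ 2 / (1 - 4 * r ^ 2) = 2 * (2 / (1 - 4 * r ^ 2) * δ ^ 2) := by ring
  linarith

theorem stmt_0 :
    ∃ C : ℝ, C > 0 ∧ ∀ A δ : ℝ, 0 < A → |δ| < 1 / 32 →
      (1 / 2) * Real.log A ≤ Real.log (1 + (1 / 2 + δ) * (A - 1)) + C * δ ^ 2 :=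
  ⟨2 / (1 - 4 * (1 / 32) ^ 2), by norm_num, fun _ _ hA hδ =>
    stmt_0_general hA hδ.le (by norm_num)⟩
end

section
/- Let (x₀,y₀),(x₁,y₁) ∈ X with x₀ ≠ x₁, and define γ : [0,1] → ℝ by γ(t) = ((1−t)·y₀/f(x₀) + t·y₁/f(x₁))·f((1−t)·x₀ + t·x₁). Then for every t ∈ [0,1], |γ'(t)/(x₁−x₀) − (y₁−y₀)/(x₁−x₀)| ≤ 3k. -/
/-!
Put `a = y₀ / f x₀`, `b = y₁ / f x₁` and `z = (1 - t) x₀ + t x₁`. Since `x₁ - z = (1 - t) (x₁ - x₀)`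
and `z - x₀ = t (x₁ - x₀)`, the mean value theorem on either side of `z` yields `c₀` and `c₁` with
`γ'(t) / (x₁ - x₀) - (y₁ - y₀) / (x₁ - x₀)
  = ((1 - t) a + t b) f'(z) - ((1 - t) (b f'(c₁)) + t (a f'(c₀)))`.
As `a, b, t ∈ [0, 1]`, both terms of this difference lie in any interval that contains `0` and the
values of `f'`. In the situation at hand that interval is `[0, k]`, so even the bound `k` holds.
-/

open Set MeasureTheory

section MeanValue

variable {f f' : ℝ → ℝ} {u v : ℝ}

theorem exists_mem_uIcc_sub_eq_mul_sub (hf : ∀ x ∈ uIcc u v, HasDerivAt f (f' x) x) :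
    ∃ c ∈ uIcc u v, f v - f u = f' c * (v - u) := by
  obtain ⟨c, hc, hfc⟩ := domain_mvt (fun x hx => (hf x hx).hasFDerivAt.hasFDerivWithinAt)
    (convex_uIcc u v) left_mem_uIcc right_mem_uIcc
  refine ⟨c, segment_eq_uIcc u v ▸ hc, hfc.trans ?_⟩
  simp [mul_comm]

theorem sub_mem_Icc_integral_of_hasDerivAt (huv : u ≤ v)
    (hf : ∀ x ∈ uIcc u v, HasDerivAt f (f' x) x) (hint : Integrable f') (hnonneg : ∀ x, 0 ≤ f' x) :
    f v - f u ∈ Icc 0 (∫ x, f' x) := by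
  have hftc : ∫ x in u..v, f' x = f v - f u :=
    intervalIntegral.integral_eq_sub_of_hasDerivAt hf hint.intervalIntegrable
  rw [← hftc]
  refine ⟨intervalIntegral.integral_nonneg huv fun x _ => hnonneg x, ?_⟩
  rw [intervalIntegral.integral_of_le huv]
  exact setIntegral_le_integral hint (ae_of_all _ hnonneg)

theorem le_of_hasDerivAt_nonneg (huv : u ≤ v) (hf : ∀ x ∈ uIcc u v, HasDerivAt f (f' x) x)
    (hnonneg : ∀ x ∈ uIcc u v, 0 ≤ f' x) : f u ≤ f v := by
  obtain ⟨c, hc, hfc⟩ := exists_mem_uIcc_sub_eq_mul_sub hf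
  exact sub_nonneg.1 (hfc ▸ mul_nonneg (hnonneg c hc) (sub_nonneg.2 huv))

end MeanValue

section Interpolation

variable {f f' : ℝ → ℝ} {x₀ x₁ t : ℝ}

theorem hasDerivAt_one_sub_mul_add_mul (u v t : ℝ) :
    HasDerivAt (fun s => (1 - s) * u + s * v) (v - u) t := by
  simpa only [← AffineMap.lineMap_apply_ring] using AffineMap.hasDerivAt_lineMap

theorem one_sub_mul_add_mul_mem {S : Set ℝ} (hS : Convex ℝ S) {u v : ℝ} (hu : u ∈ S) (hv : v ∈ S)
    (ht : t ∈ Icc (0 : ℝ) 1) : (1 - t) * u + t * v ∈ S :=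
  hS hu hv (sub_nonneg.2 ht.2) ht.1 (sub_add_cancel 1 t)

theorem hasDerivAt_interpolation_mul_comp {d : ℝ} (a b : ℝ)
    (hf : HasDerivAt f d ((1 - t) * x₀ + t * x₁)) :
    HasDerivAt (fun s => ((1 - s) * a + s * b) * f ((1 - s) * x₀ + s * x₁))
      ((b - a) * f ((1 - t) * x₀ + t * x₁) + ((1 - t) * a + t * b) * (d * (x₁ - x₀))) t :=
  (hasDerivAt_one_sub_mul_add_mul a b t).mul
    (hf.comp t (hasDerivAt_one_sub_mul_add_mul x₀ x₁ t))

theorem exists_deriv_interpolation_mul_comp_sub_eq (a b : ℝ) (ht : t ∈ Icc (0 : ℝ) 1)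
    (hf : ∀ x ∈ uIcc x₀ x₁, HasDerivAt f (f' x) x) :
    ∃ c₀ ∈ uIcc x₀ x₁, ∃ c₁ ∈ uIcc x₀ x₁,
      deriv (fun s => ((1 - s) * a + s * b) * f ((1 - s) * x₀ + s * x₁)) t
          - (b * f x₁ - a * f x₀)
        = (((1 - t) * a + t * b) * f' ((1 - t) * x₀ + t * x₁)
          - ((1 - t) * (b * f' c₁) + t * (a * f' c₀))) * (x₁ - x₀) := by
  have hz : (1 - t) * x₀ + t * x₁ ∈ uIcc x₀ x₁ :=
    one_sub_mul_add_mul_mem (convex_uIcc x₀ x₁) left_mem_uIcc right_mem_uIcc ht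
  have hleft := uIcc_subset_uIcc left_mem_uIcc hz
  have hright := uIcc_subset_uIcc hz right_mem_uIcc
  obtain ⟨c₀, hc₀, hfc₀⟩ := exists_mem_uIcc_sub_eq_mul_sub fun x hx => hf x (hleft hx)
  obtain ⟨c₁, hc₁, hfc₁⟩ := exists_mem_uIcc_sub_eq_mul_sub fun x hx => hf x (hright hx)
  refine ⟨c₀, hleft hc₀, c₁, hright hc₁, ?_⟩
  rw [(hasDerivAt_interpolation_mul_comp a b (hf _ hz)).deriv]
  linear_combination -a * hfc₀ - b * hfc₁

theorem abs_deriv_interpolation_mul_comp_sub_le {a b m M : ℝ} (ha : a ∈ Icc (0 : ℝ) 1)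
    (hb : b ∈ Icc (0 : ℝ) 1) (ht : t ∈ Icc (0 : ℝ) 1) (hmM : 0 ∈ Icc m M)
    (hf : ∀ x ∈ uIcc x₀ x₁, HasDerivAt f (f' x) x) (hf' : ∀ x ∈ uIcc x₀ x₁, f' x ∈ Icc m M) :
    |deriv (fun s => ((1 - s) * a + s * b) * f ((1 - s) * x₀ + s * x₁)) t
        - (b * f x₁ - a * f x₀)| ≤ (M - m) * |x₁ - x₀| := by
  obtain ⟨c₀, hc₀, c₁, hc₁, heq⟩ := exists_deriv_interpolation_mul_comp_sub_eq a b ht hf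
  have hscale {c r : ℝ} (hc : c ∈ Icc (0 : ℝ) 1) (hr : r ∈ Icc m M) : c * r ∈ Icc m M :=
    (convex_Icc m M).smul_mem_of_zero_mem hmM hr hc
  have hz := one_sub_mul_add_mul_mem (convex_uIcc x₀ x₁) left_mem_uIcc right_mem_uIcc ht
  have hpoint := hscale (one_sub_mul_add_mul_mem (convex_Icc 0 1) ha hb ht) (hf' _ hz)
  have hmean := one_sub_mul_add_mul_mem (convex_Icc m M) (hscale hb (hf' c₁ hc₁))
    (hscale ha (hf' c₀ hc₀)) ht
  rw [heq, abs_mul]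
  gcongr
  exact Real.dist_le_of_mem_Icc hpoint hmean

end Interpolation

theorem stmt_1_general {f f' : ℝ → ℝ} {m M x₀ y₀ x₁ y₁ t g : ℝ} (hmM : 0 ∈ Icc m M)
    (hf : ∀ x ∈ uIcc x₀ x₁, HasDerivAt f (f' x) x) (hf' : ∀ x ∈ uIcc x₀ x₁, f' x ∈ Icc m M)
    (hf₀ : 0 < f x₀) (hf₁ : 0 < f x₁) (hy₀ : y₀ ∈ Icc 0 (f x₀)) (hy₁ : y₁ ∈ Icc 0 (f x₁))
    (hne : x₀ ≠ x₁) (ht : t ∈ Icc (0 : ℝ) 1)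
    (hg : HasDerivAt
      (fun s => ((1 - s) * (y₀ / f x₀) + s * (y₁ / f x₁)) * f ((1 - s) * x₀ + s * x₁)) g t) :
    |g / (x₁ - x₀) - (y₁ - y₀) / (x₁ - x₀)| ≤ M - m := by
  have hbound := abs_deriv_interpolation_mul_comp_sub_le
    ⟨div_nonneg hy₀.1 hf₀.le, (div_le_one hf₀).2 hy₀.2⟩
    ⟨div_nonneg hy₁.1 hf₁.le, (div_le_one hf₁).2 hy₁.2⟩ ht hmM hf hf'
  rw [hg.deriv, div_mul_cancel₀ _ hf₀.ne', div_mul_cancel₀ _ hf₁.ne'] at hbound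
  rwa [← sub_div, abs_div, div_le_iff₀ (abs_pos.2 (sub_ne_zero.2 hne.symm))]

theorem stmt_1 (ε k : ℝ) (hε : 0 < ε) (hεk : ε < k) (hk : k < 1 / 2)
    (φ : ℝ → ℝ) (hφc : Continuous φ) (hφ0 : ∀ x, 0 ≤ φ x) (hφ1 : ∀ x, φ x ≤ 1)
    (hφsupp : ∀ x, x ∉ Set.Icc (-k) k → φ x = 0)
    (hφint : (∫ x, φ x) = k)
    (f f' : ℝ → ℝ)
    (hfd : ∀ x, HasDerivAt f (f' x) x)
    (hfd2 : ∀ x, HasDerivAt f' (φ x) x)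
    (hf'm1 : f' (-1) = 0) (hfm1 : f (-1) = ε)
    (x₀ y₀ x₁ y₁ : ℝ)
    (hx₀ : x₀ ∈ Set.Icc (-1 : ℝ) 1) (hy₀ : 0 ≤ y₀ ∧ y₀ ≤ f x₀)
    (hx₁ : x₁ ∈ Set.Icc (-1 : ℝ) 1) (hy₁ : 0 ≤ y₁ ∧ y₁ ≤ f x₁)
    (hne : x₀ ≠ x₁)
    (t g : ℝ) (ht : t ∈ Set.Icc (0 : ℝ) 1)
    (hg : HasDerivAt
      (fun s => ((1 - s) * (y₀ / f x₀) + s * (y₁ / f x₁)) * f ((1 - s) * x₀ + s * x₁)) g t) :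
    |g / (x₁ - x₀) - (y₁ - y₀) / (x₁ - x₀)| ≤ 3 * k := by
  have hk0 : 0 < k := hε.trans hεk
  have hint : Integrable φ := .of_integral_ne_zero (hφint ▸ hk0.ne')
  have hf' : ∀ x ∈ Ici (-1), f' x ∈ Icc 0 k := fun x hx => by
    simpa only [hf'm1, sub_zero, hφint] using
      sub_mem_Icc_integral_of_hasDerivAt hx (fun y _ => hfd2 y) hint hφ0
  have hpos : ∀ x ∈ Ici (-1), 0 < f x := fun x hx =>
    (hfm1 ▸ hε).trans_le <| le_of_hasDerivAt_nonneg hx (fun y _ => hfd y) fun y hy =>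
      (hf' y (ordConnected_Ici.uIcc_subset self_mem_Ici hx hy)).1
  have hbound := stmt_1_general ⟨le_rfl, hk0.le⟩ (fun x _ => hfd x)
    (fun x hx => hf' x (ordConnected_Ici.uIcc_subset hx₀.1 hx₁.1 hx))
    (hpos x₀ hx₀.1) (hpos x₁ hx₁.1) hy₀ hy₁ hne ht hg
  linarith
end

section
/- Assume moreover k < 1/4. Let (x₀,y₀),(x₁,y₁) ∈ X with x₀ ≠ x₁, and define γ : [0,1] → ℝ by γ(t) = ((1−t)·y₀/f(x₀) + t·y₁/f(x₁))·f((1−t)·x₀ + t·x₁). Then for every t ∈ [0,1], |γ''(t)| ≤ (x₁−x₀)² · (2k/f(x_t)) · (|(y₁−y₀)/(x₁−x₀)| + 2), where x_t = (1−t)·x₀ + t·x₁. -/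
/-!
Put `aᵢ = yᵢ / f xᵢ` and let `a_t`, `x_t` be the affine interpolations, so `γ t = a_t * f x_t` and
`γ'' t = 2 (a₁ - a₀) (x₁ - x₀) f' x_t + a_t (x₁ - x₀)² φ x_t`.
Since `f` is monotone, `f x_t` lies between `f x₀` and `f x₁`; replacing `f xᵢ` by `f x_t` in
`y₁ - y₀ = a₁ f x₁ - a₀ f x₀` therefore costs at most `|f x₁ - f x₀| ≤ k |x₁ - x₀|`, which controls
`(a₁ - a₀) f x_t` and hence the first term. In the second term `φ` is supported in `[-k, k]`, where
`f` has only climbed from `ε` to at most `ε + 2k²`, so that `φ * f ≤ k + 2k²` everywhere.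
Multiplied by `f x_t / (x₁ - x₀)²`, the error terms add up to `2k² + (k + 2k²)`, which is at
most `4k` as soon as `k ≤ 3 / 4`.
-/

open AffineMap MeasureTheory Set

section Interpolation

variable {𝕜 : Type*} [NontriviallyNormedField 𝕜] {f f' : 𝕜 → 𝕜} {m a₀ a₁ x₀ x₁ t : 𝕜}

theorem hasDerivAt_lineMap_mul_comp_lineMap (hf : HasDerivAt f m (lineMap x₀ x₁ t)) :
    HasDerivAt (fun u ↦ lineMap a₀ a₁ u * f (lineMap x₀ x₁ u))
      ((a₁ - a₀) * f (lineMap x₀ x₁ t) + lineMap a₀ a₁ t * (m * (x₁ - x₀))) t :=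
  hasDerivAt_lineMap.mul (hf.comp t hasDerivAt_lineMap)

theorem hasDerivAt_deriv_lineMap_mul_comp_lineMap (hf : ∀ x, HasDerivAt f (f' x) x)
    (hf' : HasDerivAt f' m (lineMap x₀ x₁ t)) :
    HasDerivAt (deriv fun u ↦ lineMap a₀ a₁ u * f (lineMap x₀ x₁ u))
      (2 * (a₁ - a₀) * (x₁ - x₀) * f' (lineMap x₀ x₁ t) +
        lineMap a₀ a₁ t * (x₁ - x₀) ^ 2 * m) t := by
  have deriv_eq : (deriv fun u : 𝕜 ↦ lineMap a₀ a₁ u * f (lineMap x₀ x₁ u)) = fun u ↦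
      (a₁ - a₀) * f (lineMap x₀ x₁ u) +
        lineMap a₀ a₁ u * f' (lineMap x₀ x₁ u) * (x₁ - x₀) := by
    funext u
    rw [(hasDerivAt_lineMap_mul_comp_lineMap (hf _)).deriv, mul_assoc]
  rw [deriv_eq]
  refine ((((hf _).comp t hasDerivAt_lineMap).const_mul (a₁ - a₀)).add
    ((hasDerivAt_lineMap_mul_comp_lineMap hf').mul_const (x₁ - x₀))).congr_deriv ?_
  ring

end Interpolation

section Calculus

theorem eq_of_hasDerivAt_of_eq_zero_Iio {E : Type*} [NormedAddCommGroup E] [NormedSpace ℝ E]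
    {f f' : ℝ → E} {b x y : ℝ} (hf : ∀ x, HasDerivAt f (f' x) x) (hf' : ∀ x < b, f' x = 0)
    (hx : x ≤ b) (hy : y ≤ b) : f x = f y := by
  have eq_right : ∀ z ≤ b, f b = f z := fun z hz ↦
    constant_of_has_deriv_right_zero (fun w _ ↦ (hf w).continuousAt.continuousWithinAt)
      (fun w hw ↦ hf' w hw.2 ▸ (hf w).hasDerivWithinAt) b (right_mem_Icc.2 hz)
  rw [← eq_right x hx, eq_right y hy]

variable {φ f f' : ℝ → ℝ} {a b c k : ℝ}

theorem sub_le_integral_of_hasDerivAt_nonneg (hf : ∀ x, HasDerivAt f (φ x) x)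
    (hφ : ∀ x, 0 ≤ φ x) (hφi : Integrable φ) (hab : a ≤ b) : f b - f a ≤ ∫ x, φ x := by
  rw [← intervalIntegral.integral_eq_sub_of_hasDerivAt (fun x _ ↦ hf x) hφi.intervalIntegrable,
    intervalIntegral.integral_of_le hab]
  exact setIntegral_le_integral hφi (.of_forall hφ)

theorem mem_Icc_integral_of_hasDerivAt_nonneg (hf : ∀ x, HasDerivAt f (φ x) x)
    (hφ : ∀ x, 0 ≤ φ x) (hφi : Integrable φ) (hφb : ∀ x < b, φ x = 0) (hfb : f b = 0) (x : ℝ) :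
    f x ∈ Icc 0 (∫ x, φ x) := by
  rcases le_total x b with hxb | hbx
  · rw [eq_of_hasDerivAt_of_eq_zero_Iio hf hφb hxb le_rfl, hfb]
    exact left_mem_Icc.2 (integral_nonneg hφ)
  · have f_nonneg : f b ≤ f x := monotone_of_hasDerivAt_nonneg hf hφ hbx
    have f_le := sub_le_integral_of_hasDerivAt_nonneg hf hφ hφi hbx
    rw [hfb] at f_nonneg f_le
    exact ⟨f_nonneg, by simpa only [sub_zero] using f_le⟩

theorem abs_sub_le_of_hasDerivAt (hf : ∀ x, HasDerivAt f (f' x) x) (hf' : ∀ x, |f' x| ≤ k)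
    (x y : ℝ) : |f y - f x| ≤ k * |y - x| :=
  convex_univ.norm_image_sub_le_of_norm_hasDerivWithin_le
    (fun z _ ↦ (hf z).hasDerivWithinAt) (fun z _ ↦ hf' z) (mem_univ x) (mem_univ y)

theorem mul_le_of_support_subset_Icc (hφ : ∀ x, φ x ≤ 1)
    (hφs : ∀ x, x ∉ Icc b c → φ x = 0) (hf : ∀ x, 0 ≤ f x)
    (hlip : ∀ x y, |f y - f x| ≤ k * |y - x|) (hbc : b ≤ c) (x : ℝ) :
    φ x * f x ≤ f b + k * (c - b) := by
  have hk : 0 ≤ k := by simpa using (abs_nonneg _).trans (hlip 0 1)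
  by_cases hx : x ∈ Icc b c
  · calc φ x * f x ≤ f x := mul_le_of_le_one_left (hf x) (hφ x)
      _ ≤ f b + k * |x - b| := sub_le_iff_le_add'.1 ((le_abs_self _).trans (hlip b x))
      _ = f b + k * (x - b) := by rw [abs_of_nonneg (sub_nonneg.2 hx.1)]
      _ ≤ f b + k * (c - b) := by gcongr; exact hx.2
  · rw [hφs x hx, zero_mul]
    exact add_nonneg (hf b) (mul_nonneg hk (sub_nonneg.2 hbc))

end Calculus

section Estimates

variable {a₀ a₁ f₀ f₁ F : ℝ}

theorem abs_sub_mul_le_of_mem_uIcc (ha₀ : |a₀| ≤ 1) (ha₁ : |a₁| ≤ 1) (hF : F ∈ uIcc f₀ f₁) :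
    |(a₁ - a₀) * F| ≤ |a₁ * f₁ - a₀ * f₀| + |f₁ - f₀| := by
  have dist_split : |F - f₁| + |F - f₀| = |f₁ - f₀| := by
    rw [uIcc_comm, ← segment_eq_uIcc] at hF
    simpa only [Real.dist_eq, abs_sub_comm f₁ F] using dist_add_dist_of_mem_segment hF
  calc |(a₁ - a₀) * F|
      = |(a₁ * f₁ - a₀ * f₀) + (a₁ * (F - f₁) - a₀ * (F - f₀))| := by congr 1; ring
    _ ≤ |a₁ * f₁ - a₀ * f₀| + (|a₁ * (F - f₁)| + |a₀ * (F - f₀)|) :=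
      (abs_add_le _ _).trans (by gcongr; exact abs_sub _ _)
    _ ≤ |a₁ * f₁ - a₀ * f₀| + (|F - f₁| + |F - f₀|) := by
      rw [abs_mul, abs_mul]
      gcongr
      · exact mul_le_of_le_one_left (abs_nonneg _) ha₁
      · exact mul_le_of_le_one_left (abs_nonneg _) ha₀
    _ = |a₁ * f₁ - a₀ * f₀| + |f₁ - f₀| := by rw [dist_split]

theorem abs_two_mul_add_le {d h m A p r k C : ℝ} (hF : 0 < F) (hd : |d * F| ≤ |h| * r)
    (hm : |m| ≤ k) (hA : |A| ≤ 1) (hp : |p * F| ≤ C) :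
    |2 * d * h * m + A * h ^ 2 * p| ≤ h ^ 2 * ((2 * k * r + C) / F) := by
  have first_term : |2 * (d * F) * h * m| ≤ 2 * (|h| * r) * |h| * k := by
    rw [abs_mul, abs_mul, abs_mul, abs_two]
    gcongr
    exact mul_nonneg (mul_nonneg zero_le_two ((abs_nonneg _).trans hd)) (abs_nonneg _)
  have second_term : |A * h ^ 2 * (p * F)| ≤ 1 * h ^ 2 * C := by
    rw [abs_mul, abs_mul, abs_sq]
    gcongr
  rw [← mul_div_assoc, le_div_iff₀ hF]
  calc |2 * d * h * m + A * h ^ 2 * p| * F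
      = |2 * (d * F) * h * m + A * h ^ 2 * (p * F)| := by
        rw [← abs_of_pos hF, ← abs_mul, abs_of_pos hF]; congr 1; ring
    _ ≤ 2 * (|h| * r) * |h| * k + 1 * h ^ 2 * C :=
        (abs_add_le _ _).trans (add_le_add first_term second_term)
    _ = h ^ 2 * (2 * k * r + C) := by rw [← sq_abs h]; ring

end Estimates

theorem abs_deriv_deriv_lineMap_div_mul_le {f f' φ : ℝ → ℝ} {k C x₀ y₀ x₁ y₁ t : ℝ}
    (hf : ∀ x, HasDerivAt f (f' x) x) (hf' : ∀ x, HasDerivAt f' (φ x) x) (hf_pos : ∀ x, 0 < f x)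
    (hf'_mem : ∀ x, f' x ∈ Icc 0 k) (hφf : ∀ x, |φ x * f x| ≤ C)
    (hy₀ : |y₀| ≤ f x₀) (hy₁ : |y₁| ≤ f x₁) (hne : x₀ ≠ x₁) (ht : t ∈ Icc (0 : ℝ) 1) :
    |deriv (deriv fun u ↦ lineMap (y₀ / f x₀) (y₁ / f x₁) u * f (lineMap x₀ x₁ u)) t| ≤
      (x₁ - x₀) ^ 2 *
        ((2 * k * (|(y₁ - y₀) / (x₁ - x₀)| + k) + C) / f (lineMap x₀ x₁ t)) := by
  have abs_f'_le : ∀ x, |f' x| ≤ k := fun x ↦ (abs_of_nonneg (hf'_mem x).1).trans_le (hf'_mem x).2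
  have f_mono : Monotone f := monotone_of_hasDerivAt_nonneg hf fun x ↦ (hf'_mem x).1
  have abs_ratio_le : ∀ {x y}, |y| ≤ f x → |y / f x| ≤ 1 := fun {x y} hy ↦ by
    rw [abs_div, abs_of_pos (hf_pos x)]
    exact div_le_one_of_le₀ hy (hf_pos x).le
  have f_mem : f (lineMap x₀ x₁ t) ∈ uIcc (f x₀) (f x₁) :=
    f_mono.image_uIcc_subset (mem_image_of_mem f
      (segment_eq_uIcc x₀ x₁ ▸ lineMap_mem_segment ℝ x₀ x₁ ht))
  rw [(hasDerivAt_deriv_lineMap_mul_comp_lineMap hf (hf' _)).deriv]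
  refine abs_two_mul_add_le (hf_pos _) ?_ (abs_f'_le _) ?_ (hφf _)
  · calc |(y₁ / f x₁ - y₀ / f x₀) * f (lineMap x₀ x₁ t)|
        ≤ |y₁ / f x₁ * f x₁ - y₀ / f x₀ * f x₀| + |f x₁ - f x₀| :=
          abs_sub_mul_le_of_mem_uIcc (abs_ratio_le hy₀) (abs_ratio_le hy₁) f_mem
      _ ≤ |y₁ - y₀| + k * |x₁ - x₀| := by
          rw [div_mul_cancel₀ _ (hf_pos _).ne', div_mul_cancel₀ _ (hf_pos _).ne']
          gcongr
          exact abs_sub_le_of_hasDerivAt hf abs_f'_le x₀ x₁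
      _ = |x₁ - x₀| * (|(y₁ - y₀) / (x₁ - x₀)| + k) := by
          have : |x₁ - x₀| ≠ 0 := abs_ne_zero.2 (sub_ne_zero.2 hne.symm)
          rw [abs_div]
          field_simp
  · exact abs_le.2 ((convex_Icc (-1 : ℝ) 1).lineMap_mem (abs_le.1 (abs_ratio_le hy₀))
      (abs_le.1 (abs_ratio_le hy₁)) ht)

theorem stmt_2_general (ε k : ℝ) (hε : 0 < ε) (hεk : ε ≤ k) (hk : k ≤ 3 / 4)
    (φ : ℝ → ℝ) (hφ0 : ∀ x, 0 ≤ φ x) (hφ1 : ∀ x, φ x ≤ 1)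
    (hφsupp : ∀ x, x ∉ Icc (-k) k → φ x = 0) (hφint : (∫ x, φ x) = k)
    (f f' : ℝ → ℝ) (hfd : ∀ x, HasDerivAt f (f' x) x) (hfd2 : ∀ x, HasDerivAt f' (φ x) x)
    (hf'm1 : f' (-1) = 0) (hfm1 : f (-1) = ε)
    (x₀ y₀ x₁ y₁ : ℝ) (hy₀ : |y₀| ≤ f x₀) (hy₁ : |y₁| ≤ f x₁) (hne : x₀ ≠ x₁)
    (γ' : ℝ → ℝ)
    (hγ' : ∀ s, HasDerivAt
      (fun u => ((1 - u) * (y₀ / f x₀) + u * (y₁ / f x₁)) * f ((1 - u) * x₀ + u * x₁)) (γ' s) s)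
    (t g : ℝ) (ht : t ∈ Icc (0 : ℝ) 1) (hg : HasDerivAt γ' g t) :
    |g| ≤ (x₁ - x₀) ^ 2 * (2 * k / f ((1 - t) * x₀ + t * x₁)) *
      (|(y₁ - y₀) / (x₁ - x₀)| + 2) := by
  simp only [← lineMap_apply_ring] at hγ' ⊢
  have hk0 : 0 < k := hε.trans_le hεk
  have φ_integrable : Integrable φ := not_imp_comm.1 integral_undef (hφint ▸ hk0.ne')
  have φ_left : ∀ x < -k, φ x = 0 := fun x hx ↦ hφsupp x fun h ↦ hx.not_ge h.1
  have neg_one_le : -1 ≤ -k := by linarith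
  have f'_left : ∀ x ≤ -k, f' x = 0 := fun x hx ↦
    (eq_of_hasDerivAt_of_eq_zero_Iio hfd2 φ_left hx neg_one_le).trans hf'm1
  have f_left : ∀ x ≤ -k, f x = ε := fun x hx ↦
    (eq_of_hasDerivAt_of_eq_zero_Iio hfd (fun z hz ↦ f'_left z hz.le) hx neg_one_le).trans hfm1
  have f'_mem : ∀ x, f' x ∈ Icc 0 k := hφint ▸
    mem_Icc_integral_of_hasDerivAt_nonneg hfd2 hφ0 φ_integrable φ_left (f'_left _ le_rfl)
  have f_pos : ∀ x, 0 < f x := fun x ↦ by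
    have f_mono : Monotone f := monotone_of_hasDerivAt_nonneg hfd fun x ↦ (f'_mem x).1
    exact (f_left _ (min_le_right x (-k)) ▸ hε).trans_le (f_mono (min_le_left x (-k)))
  have φ_mul_f_le : ∀ x, |φ x * f x| ≤ ε + k * (k - -k) := fun x ↦ by
    rw [abs_of_nonneg (mul_nonneg (hφ0 x) (f_pos x).le), ← f_left _ le_rfl]
    exact mul_le_of_support_subset_Icc hφ1 hφsupp (fun x ↦ (f_pos x).le)
      (abs_sub_le_of_hasDerivAt hfd fun x ↦ (abs_of_nonneg (f'_mem x).1).trans_le (f'_mem x).2)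
      (by linarith) x
  have γ'_eq := funext fun s ↦ (hγ' s).deriv.symm
  rw [← hg.deriv, γ'_eq, mul_assoc, div_mul_eq_mul_div]
  refine (abs_deriv_deriv_lineMap_div_mul_le hfd hfd2 f_pos f'_mem φ_mul_f_le hy₀ hy₁ hne
    ht).trans ?_
  have hft := f_pos (lineMap x₀ x₁ t)
  have error_le : 2 * k * k + (ε + k * (k - -k)) ≤ 2 * k * 2 := by
    linarith [mul_le_mul_of_nonneg_left hk hk0.le]
  gcongr
  linarith

theorem stmt_2 (ε k : ℝ) (hε : 0 < ε) (hεk : ε < k) (hk : k < 1 / 2) (hk4 : k < 1 / 4)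
    (φ : ℝ → ℝ) (hφc : Continuous φ) (hφ0 : ∀ x, 0 ≤ φ x) (hφ1 : ∀ x, φ x ≤ 1)
    (hφsupp : ∀ x, x ∉ Set.Icc (-k) k → φ x = 0)
    (hφint : (∫ x, φ x) = k)
    (f f' : ℝ → ℝ)
    (hfd : ∀ x, HasDerivAt f (f' x) x)
    (hfd2 : ∀ x, HasDerivAt f' (φ x) x)
    (hf'm1 : f' (-1) = 0) (hfm1 : f (-1) = ε)
    (x₀ y₀ x₁ y₁ : ℝ)
    (hx₀ : x₀ ∈ Set.Icc (-1 : ℝ) 1) (hy₀ : 0 ≤ y₀ ∧ y₀ ≤ f x₀)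
    (hx₁ : x₁ ∈ Set.Icc (-1 : ℝ) 1) (hy₁ : 0 ≤ y₁ ∧ y₁ ≤ f x₁)
    (hne : x₀ ≠ x₁)
    (γ' : ℝ → ℝ)
    (hγ' : ∀ s, HasDerivAt
      (fun u => ((1 - u) * (y₀ / f x₀) + u * (y₁ / f x₁)) * f ((1 - u) * x₀ + u * x₁)) (γ' s) s)
    (t g : ℝ) (ht : t ∈ Set.Icc (0 : ℝ) 1)
    (hg : HasDerivAt γ' g t) :
    |g| ≤ (x₁ - x₀) ^ 2 * (2 * k / f ((1 - t) * x₀ + t * x₁)) *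
      (|(y₁ - y₀) / (x₁ - x₀)| + 2) := by
  exact stmt_2_general ε k hε hεk.le (by linarith) φ hφ0 hφ1 hφsupp hφint f f' hfd hfd2 hf'm1 hfm1
    x₀ y₀ x₁ y₁ ((abs_of_nonneg hy₀.1).trans_le hy₀.2)
    ((abs_of_nonneg hy₁.1).trans_le hy₁.2) hne γ' hγ' t g ht hg
end

section
/- For every constant H ≥ 0 there exists k₀ > 0 such that the following holds for all ε, k with 0 < ε < k < k₀ and all K ≥ 1. Let [x₀,x₁] ⊆ [−1,1] with x₀ < x₁ and let y : [x₀,x₁] → ℝ be a C² function with 0 ≤ y(x) ≤ f(x), y'(x) ≥ 1/4 and |y''(x)| ≤ H·k/f(x) for every x ∈ [x₀,x₁]. Then, writing log m(x, y(x)) = −log f(x) − K·(y(x)/f(x))², one has log m((x₀+x₁)/2, y((x₀+x₁)/2)) ≥ (1/2)·log m(x₀, y(x₀)) + (1/2)·log m(x₁, y(x₁)) + K·(x₁−x₀)²/(128·f(x₁)²). -/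
/-!
Write `u = y / f`, so that `log m = -log f - K u²` along the graph of `y`, with second derivative
`(f' / f)² - f'' / f - 2 K (u'² + u u'')`. Since `f u' = y' - u f'` with `y' ≥ 1/4` and
`0 ≤ u f' ≤ k`, the term `f² u'²` is at least about `1/16`, while every other term, multiplied by
`f²`, is `O(k)`. For small `k` the second derivative is therefore at most `-K / (16 f²)`, and `f` is
nondecreasing, so `log m` is strongly concave along the graph with modulus `K / (16 f(x₁)²)`.
-/

open Set MeasureTheory

section StrongConcavity

theorem strongConcaveOn_of_hasDerivWithinAt2_le {D : Set ℝ} (hD : Convex ℝ D) {g g' g'' : ℝ → ℝ}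
    {m : ℝ} (hg : ∀ x ∈ D, HasDerivWithinAt g (g' x) D x)
    (hg' : ∀ x ∈ D, HasDerivWithinAt g' (g'' x) D x) (hg'' : ∀ x ∈ D, g'' x ≤ -m) :
    StrongConcaveOn D m g := by
  have hq (x : ℝ) : HasDerivWithinAt (fun t ↦ m / 2 * ‖t‖ ^ 2) (m * x) D x := by
    simp only [Real.norm_eq_abs, sq_abs]
    exact (((hasDerivAt_id' x).fun_pow 2).const_mul (m / 2)).hasDerivWithinAt.congr_deriv
      (by norm_num; ring)
  have hl (x : ℝ) : HasDerivWithinAt (fun t ↦ m * t) m D x :=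
    ((hasDerivAt_id' x).const_mul m).hasDerivWithinAt.congr_deriv (mul_one m)
  have hsum : ∀ x ∈ D, HasDerivWithinAt (fun t ↦ g t + m / 2 * ‖t‖ ^ 2) (g' x + m * x) D x :=
    fun x hx ↦ (hg x hx).fun_add (hq x)
  refine strongConcaveOn_iff_convex.2 (concaveOn_of_hasDerivWithinAt2_nonpos hD
    (fun x hx ↦ (hsum x hx).continuousWithinAt)
    (fun x hx ↦ (hsum x (interior_subset hx)).mono interior_subset)
    (fun x hx ↦ ((hg' x (interior_subset hx)).fun_add (hl x)).mono interior_subset)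
    fun x hx ↦ ?_)
  linarith [hg'' x (interior_subset hx)]

theorem add_le_apply_midpoint_of_strongConcaveOn {E : Type*} [NormedAddCommGroup E]
    [NormedSpace ℝ E] {s : Set E} {m : ℝ} {g : E → ℝ} (hg : StrongConcaveOn s m g) {x y : E}
    (hx : x ∈ s) (hy : y ∈ s) :
    1 / 2 * g x + 1 / 2 * g y + m / 8 * ‖x - y‖ ^ 2 ≤ g (midpoint ℝ x y) := by
  have hhalf : (0 : ℝ) ≤ 1 / 2 := by norm_num
  have hmid : (1 / 2 : ℝ) • x + (1 / 2 : ℝ) • y = midpoint ℝ x y := by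
    rw [midpoint_eq_smul_add, smul_add, invOf_eq_inv, one_div]
  have h := hg.2 hx hy hhalf hhalf (by norm_num)
  simp only [hmid, smul_eq_mul] at h
  linarith

end StrongConcavity

section Quotient

variable {𝕜 : Type*} [NontriviallyNormedField 𝕜] {y y' y'' f f' f'' : 𝕜 → 𝕜} {s : Set 𝕜} {x : 𝕜}

/-- The derivative `u' = (y' - u f') / f` of the quotient `u = y / f`. -/
def quotientDeriv (y y' f f' : 𝕜 → 𝕜) (x : 𝕜) : 𝕜 :=
  (y' x - y x / f x * f' x) / f x

/-- The second derivative `u'' = (y'' - u f'' - 2 f' u') / f` of the quotient `u = y / f`. -/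
def quotientDeriv2 (y y' y'' f f' f'' : 𝕜 → 𝕜) (x : 𝕜) : 𝕜 :=
  (y'' x - y x / f x * f'' x - 2 * f' x * quotientDeriv y y' f f' x) / f x

theorem hasDerivWithinAt_quotient (hy : HasDerivWithinAt y (y' x) s x)
    (hf : HasDerivWithinAt f (f' x) s x) (hfx : f x ≠ 0) :
    HasDerivWithinAt (fun t ↦ y t / f t) (quotientDeriv y y' f f' x) s x := by
  refine (hy.fun_div hf hfx).congr_deriv ?_
  rw [quotientDeriv]
  field_simp

theorem hasDerivWithinAt_quotientDeriv (hy : HasDerivWithinAt y (y' x) s x)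
    (hy' : HasDerivWithinAt y' (y'' x) s x) (hf : HasDerivWithinAt f (f' x) s x)
    (hf' : HasDerivWithinAt f' (f'' x) s x) (hfx : f x ≠ 0) :
    HasDerivWithinAt (quotientDeriv y y' f f') (quotientDeriv2 y y' y'' f f' f'' x) s x := by
  have hu := hasDerivWithinAt_quotient hy hf hfx
  refine ((hy'.fun_sub (hu.fun_mul hf')).fun_div hf hfx).congr_deriv ?_
  simp only [quotientDeriv, quotientDeriv2]
  field_simp
  ring

end Quotient

section LogDensity

variable {K x : ℝ} {y y' y'' f f' f'' : ℝ → ℝ} {s : Set ℝ}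

/-- The logarithm `log m (x, y x)` of the reference density `m (x, y) = exp (-K (y / f x)²) / f x`
along the graph of `y`. -/
noncomputable def logDensity (K : ℝ) (f y : ℝ → ℝ) (x : ℝ) : ℝ :=
  -Real.log (f x) - K * (y x / f x) ^ 2

/-- The derivative of `logDensity`, namely `-f' / f - 2 K u u'` with `u = y / f`. -/
noncomputable def logDensityDeriv (K : ℝ) (f f' y y' : ℝ → ℝ) (x : ℝ) : ℝ :=
  -(f' x / f x) - 2 * K * (y x / f x * quotientDeriv y y' f f' x)

/-- The second derivative of `logDensity`, namely
`(f' / f)² - f'' / f - 2 K (u'² + u u'')` with `u = y / f`. -/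
noncomputable def logDensityDeriv2 (K : ℝ) (f f' f'' y y' y'' : ℝ → ℝ) (x : ℝ) : ℝ :=
  (f' x / f x) ^ 2 - f'' x / f x -
    2 * K * (quotientDeriv y y' f f' x ^ 2 + y x / f x * quotientDeriv2 y y' y'' f f' f'' x)

theorem hasDerivWithinAt_logDensity (hf : HasDerivWithinAt f (f' x) s x)
    (hy : HasDerivWithinAt y (y' x) s x) (hfx : f x ≠ 0) :
    HasDerivWithinAt (logDensity K f y) (logDensityDeriv K f f' y y' x) s x := by
  have hu := hasDerivWithinAt_quotient hy hf hfx
  refine ((hf.log hfx).fun_neg.fun_sub ((hu.fun_pow 2).const_mul K)).congr_deriv ?_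
  rw [logDensityDeriv]
  push_cast
  ring

theorem hasDerivWithinAt_logDensityDeriv (hf : HasDerivWithinAt f (f' x) s x)
    (hf' : HasDerivWithinAt f' (f'' x) s x) (hy : HasDerivWithinAt y (y' x) s x)
    (hy' : HasDerivWithinAt y' (y'' x) s x) (hfx : f x ≠ 0) :
    HasDerivWithinAt (logDensityDeriv K f f' y y')
      (logDensityDeriv2 K f f' f'' y y' y'' x) s x := by
  have hu := hasDerivWithinAt_quotient hy hf hfx
  have hu' := hasDerivWithinAt_quotientDeriv hy hy' hf hf' hfx
  refine ((hf'.fun_div hf hfx).fun_neg.fun_sub ((hu.fun_mul hu').const_mul (2 * K))).congr_deriv ?_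
  rw [logDensityDeriv2]
  field_simp
  ring

theorem sq_mul_logDensityDeriv2 (hfx : f x ≠ 0) :
    f x ^ 2 * logDensityDeriv2 K f f' f'' y y' y'' x = f' x ^ 2 - f x * f'' x -
      2 * K * ((y' x - y x / f x * f' x) * (y' x - 3 * (y x / f x * f' x)) +
        y x / f x * (f x * y'' x) - (y x / f x) ^ 2 * (f x * f'' x)) := by
  simp only [logDensityDeriv2, quotientDeriv2, quotientDeriv]
  field_simp
  ring

end LogDensity

/-- `f` is a positive, nondecreasing, convex profile on `s` of height at most `3k`, slope at most
`k` and second derivative at most `1`. The functions `f'` and `f''` are its derivatives within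
`s`. -/
structure IsProfile (k : ℝ) (s : Set ℝ) (f f' f'' : ℝ → ℝ) : Prop where
  hasDeriv : ∀ x ∈ s, HasDerivWithinAt f (f' x) s x
  hasDeriv2 : ∀ x ∈ s, HasDerivWithinAt f' (f'' x) s x
  pos : ∀ x ∈ s, 0 < f x
  le_three_mul : ∀ x ∈ s, f x ≤ 3 * k
  deriv_nonneg : ∀ x ∈ s, 0 ≤ f' x
  deriv_le : ∀ x ∈ s, f' x ≤ k
  deriv2_nonneg : ∀ x ∈ s, 0 ≤ f'' x
  deriv2_le_one : ∀ x ∈ s, f'' x ≤ 1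

/-- The graph of `y` over `s` lies between `0` and the profile `f`, climbs with slope at least
`1/4`, and bends by at most `H k / f`. The functions `y'` and `y''` are the derivatives of `y`
within `s`. -/
structure IsSteepGraph (H k : ℝ) (f : ℝ → ℝ) (s : Set ℝ) (y y' y'' : ℝ → ℝ) : Prop where
  hasDeriv : ∀ x ∈ s, HasDerivWithinAt y (y' x) s x
  hasDeriv2 : ∀ x ∈ s, HasDerivWithinAt y' (y'' x) s x
  mem_Icc : ∀ x ∈ s, 0 ≤ y x ∧ y x ≤ f x
  le_deriv : ∀ x ∈ s, 1 / 4 ≤ y' x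
  abs_deriv2_le : ∀ x ∈ s, |y'' x| ≤ H * k / f x

section Concavity

variable {H k K M : ℝ} {s : Set ℝ} {f f' f'' y y' y'' : ℝ → ℝ}

theorem IsProfile.monotoneOn (hf : IsProfile k s f f' f'') (hs : Convex ℝ s) : MonotoneOn f s :=
  monotoneOn_of_hasDerivWithinAt_nonneg hs (fun x hx ↦ (hf.hasDeriv x hx).continuousWithinAt)
    (fun x hx ↦ (hf.hasDeriv x (interior_subset hx)).mono interior_subset)
    fun x hx ↦ hf.deriv_nonneg x (interior_subset hx)

/-- With `F = f`, `p = f'`, `q = f''`, `Y = y'`, `Z = y''`, the right-hand side is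
`f² (u'² + u u'')`, where `u = y / f`. -/
theorem le_sq_mul_quotientDeriv_sq_add {F p q u Y Z : ℝ} (hk : k ≤ 1 / 8) (hp : 0 ≤ p)
    (hpk : p ≤ k) (hFq : 0 ≤ F * q) (hFq' : F * q ≤ 3 * k) (hu : 0 ≤ u) (hu' : u ≤ 1)
    (hY : 1 / 4 ≤ Y) (hFZ : |F * Z| ≤ H * k) :
    1 / 16 - (4 + H) * k ≤ (Y - u * p) * (Y - 3 * (u * p)) + u * (F * Z) - u ^ 2 * (F * q) := by
  have hslope : 1 / 16 - k ≤ (Y - u * p) * (Y - 3 * (u * p)) := by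
    have hup : u * p ≤ k := (mul_le_of_le_one_left hp hu').trans hpk
    calc 1 / 16 - k ≤ Y ^ 2 - 4 * k * Y := by nlinarith
      _ ≤ Y ^ 2 - 4 * (u * p) * Y + 3 * (u * p) ^ 2 := by nlinarith [sq_nonneg (u * p)]
      _ = (Y - u * p) * (Y - 3 * (u * p)) := by ring
  have hbend : -(H * k) ≤ u * (F * Z) := by
    refine (abs_le.1 ?_).1
    rw [abs_mul, abs_of_nonneg hu]
    exact (mul_le_of_le_one_left (abs_nonneg _) hu').trans hFZ
  have hconvex : u ^ 2 * (F * q) ≤ 3 * k :=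
    (mul_le_of_le_one_left hFq (pow_le_one₀ hu hu')).trans hFq'
  linarith

theorem logDensityDeriv2_le (hf : IsProfile k s f f' f'') (hy : IsSteepGraph H k f s y y' y'')
    (hK : 1 ≤ K) (hk : (9 + 2 * H) * k ≤ 1 / 16) {x : ℝ} (hx : x ∈ s) :
    logDensityDeriv2 K f f' f'' y y' y'' x ≤ -(K / (16 * f x ^ 2)) := by
  have hfx := hf.pos x hx
  have hf'x := hf.deriv_nonneg x hx
  have hf'k := hf.deriv_le x hx
  have hff'' : 0 ≤ f x * f'' x := mul_nonneg hfx.le (hf.deriv2_nonneg x hx)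
  have hff''_le : f x * f'' x ≤ 3 * k :=
    (mul_le_of_le_one_right hfx.le (hf.deriv2_le_one x hx)).trans (hf.le_three_mul x hx)
  have hfy'' : |f x * y'' x| ≤ H * k := by
    rw [abs_mul, abs_of_pos hfx]
    exact (le_div_iff₀' hfx).1 (hy.abs_deriv2_le x hx)
  have hk_small : k ≤ 1 / 8 := by linarith [abs_nonneg (f x * y'' x)]
  have hmain := le_sq_mul_quotientDeriv_sq_add hk_small hf'x hf'k hff'' hff''_le
    (div_nonneg (hy.mem_Icc x hx).1 hfx.le) ((div_le_one hfx).2 (hy.mem_Icc x hx).2)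
    (hy.le_deriv x hx) hfy''
  have hf'_sq : f' x ^ 2 ≤ k := by nlinarith
  have hscaled : f x ^ 2 * logDensityDeriv2 K f f' f'' y y' y'' x ≤ -(K / 16) := by
    rw [sq_mul_logDensityDeriv2 hfx.ne']
    -- The smallness of `k` enters as `2 (1/16 - (4 + H) k) ≥ 1/16 + k`.
    nlinarith
  rw [← div_div, ← neg_div, le_div_iff₀' (by positivity)]
  exact hscaled

theorem strongConcaveOn_logDensity (hs : Convex ℝ s) (hf : IsProfile k s f f' f'')
    (hy : IsSteepGraph H k f s y y' y'') (hK : 1 ≤ K) (hk : (9 + 2 * H) * k ≤ 1 / 16)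
    (hM : ∀ x ∈ s, f x ≤ M) :
    StrongConcaveOn s (K / (16 * M ^ 2)) (logDensity K f y) := by
  refine strongConcaveOn_of_hasDerivWithinAt2_le hs
    (fun x hx ↦ hasDerivWithinAt_logDensity (hf.hasDeriv x hx) (hy.hasDeriv x hx)
      (hf.pos x hx).ne')
    (fun x hx ↦ hasDerivWithinAt_logDensityDeriv (hf.hasDeriv x hx) (hf.hasDeriv2 x hx)
      (hy.hasDeriv x hx) (hy.hasDeriv2 x hx) (hf.pos x hx).ne')
    fun x hx ↦ (logDensityDeriv2_le hf hy hK hk hx).trans (neg_le_neg ?_)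
  have hfx := hf.pos x hx
  gcongr
  exact hM x hx

end Concavity

section Profile

theorem le_add_integral_of_hasDerivAt {g φ : ℝ → ℝ} (hg : ∀ x, HasDerivAt g (φ x) x)
    (hφ : Integrable φ) (hφ0 : ∀ x, 0 ≤ φ x) {a x : ℝ} (hax : a ≤ x) :
    g x ≤ g a + ∫ t, φ t := by
  have hftc : ∫ t in a..x, φ t = g x - g a :=
    intervalIntegral.integral_eq_sub_of_hasDerivAt (fun t _ ↦ hg t) hφ.intervalIntegrable
  rw [intervalIntegral.integral_of_le hax] at hftc
  linarith [setIntegral_le_integral (s := Ioc a x) hφ (.of_forall hφ0)]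

theorem le_add_mul_sub_of_hasDerivAt_le {g g' : ℝ → ℝ} {a x C : ℝ}
    (hg : ∀ t, HasDerivAt g (g' t) t) (hg' : ∀ t, a ≤ t → g' t ≤ C) (hax : a ≤ x) :
    g x ≤ g a + C * (x - a) := by
  have h := (convex_Ici a).image_sub_le_mul_sub_of_deriv_le
    (fun t _ ↦ (hg t).continuousAt.continuousWithinAt)
    (fun t _ ↦ (hg t).differentiableAt.differentiableWithinAt)
    (fun t ht ↦ (hg t).deriv.trans_le (hg' t (interior_subset ht))) a self_mem_Ici x hax hax
  linarith

theorem isProfile_of_integral_eq {k a b : ℝ} {s : Set ℝ} {f f' φ : ℝ → ℝ}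
    (hφ0 : ∀ x, 0 ≤ φ x) (hφ1 : ∀ x, φ x ≤ 1) (hφ : ∫ x, φ x = k)
    (hf : ∀ x, HasDerivAt f (f' x) x) (hf' : ∀ x, HasDerivAt f' (φ x) x) (hf'a : f' a = 0)
    (hfa : 0 < f a) (hfa' : f a ≤ k) (hab : b - a ≤ 2) (hs : s ⊆ Icc a b) :
    IsProfile k s f f' φ := by
  have hk : 0 < k := hfa.trans_le hfa'
  have hint : Integrable φ := .of_integral_ne_zero (by rw [hφ]; exact hk.ne')
  have hf'_nonneg : ∀ x, a ≤ x → 0 ≤ f' x := fun x hx ↦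
    hf'a.ge.trans (monotone_of_hasDerivAt_nonneg hf' hφ0 hx)
  have hf'_le : ∀ x, a ≤ x → f' x ≤ k := fun x hx ↦ by
    simpa only [hf'a, hφ, zero_add] using le_add_integral_of_hasDerivAt hf' hint hφ0 hx
  have hf_mono : MonotoneOn f (Ici a) := monotoneOn_of_hasDerivWithinAt_nonneg (convex_Ici a)
    (fun x _ ↦ (hf x).continuousAt.continuousWithinAt) (fun x _ ↦ (hf x).hasDerivWithinAt)
    fun x hx ↦ hf'_nonneg x (interior_subset hx)
  exact
    { hasDeriv := fun x _ ↦ (hf x).hasDerivWithinAt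
      hasDeriv2 := fun x _ ↦ (hf' x).hasDerivWithinAt
      pos := fun x hx ↦ hfa.trans_le (hf_mono self_mem_Ici (hs hx).1 (hs hx).1)
      le_three_mul := fun x hx ↦ by
        have hgrowth := le_add_mul_sub_of_hasDerivAt_le hf hf'_le (hs hx).1
        have hwidth : x - a ≤ 2 := by linarith [(hs hx).2]
        linarith [mul_le_mul_of_nonneg_left hwidth hk.le]
      deriv_nonneg := fun x hx ↦ hf'_nonneg x (hs hx).1
      deriv_le := fun x hx ↦ hf'_le x (hs hx).1
      deriv2_nonneg := fun x _ ↦ hφ0 x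
      deriv2_le_one := fun x _ ↦ hφ1 x }

end Profile

theorem stmt_3_general {H k K x₀ x₁ : ℝ} {f f' f'' y y' y'' : ℝ → ℝ}
    (hk : (9 + 2 * H) * k ≤ 1 / 16) (hK : 1 ≤ K) (hx : x₀ ≤ x₁)
    (hf : IsProfile k (Icc x₀ x₁) f f' f'') (hy : IsSteepGraph H k f (Icc x₀ x₁) y y' y'') :
    1 / 2 * logDensity K f y x₀ + 1 / 2 * logDensity K f y x₁ +
        K * (x₁ - x₀) ^ 2 / (128 * f x₁ ^ 2) ≤
      logDensity K f y ((x₀ + x₁) / 2) := by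
  have hconc : StrongConcaveOn (Icc x₀ x₁) (K / (16 * f x₁ ^ 2)) (logDensity K f y) :=
    strongConcaveOn_logDensity (convex_Icc _ _) hf hy hK hk fun x hx' ↦
      hf.monotoneOn (convex_Icc _ _) hx' (right_mem_Icc.2 hx) hx'.2
  have hmid := add_le_apply_midpoint_of_strongConcaveOn hconc (left_mem_Icc.2 hx)
    (right_mem_Icc.2 hx)
  have hgap : K / (16 * f x₁ ^ 2) / 8 * ‖x₀ - x₁‖ ^ 2 = K * (x₁ - x₀) ^ 2 / (128 * f x₁ ^ 2) := by
    rw [Real.norm_eq_abs, sq_abs]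
    ring
  rwa [hgap, midpoint_eq_smul_add, smul_eq_mul, invOf_eq_inv, inv_mul_eq_div] at hmid

theorem stmt_3 :
    ∀ H : ℝ, 0 ≤ H → ∃ k₀ > (0 : ℝ), ∀ ε k K : ℝ, 0 < ε → ε < k → k < k₀ → 1 ≤ K →
    ∀ φ : ℝ → ℝ, Continuous φ → (∀ x, 0 ≤ φ x) → (∀ x, φ x ≤ 1) →
      (∀ x, x ∉ Set.Icc (-k) k → φ x = 0) → (∫ x, φ x) = k →
    ∀ f f' : ℝ → ℝ, (∀ x, HasDerivAt f (f' x) x) → (∀ x, HasDerivAt f' (φ x) x) →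
      f' (-1) = 0 → f (-1) = ε →
    ∀ x₀ x₁ : ℝ, x₀ < x₁ → Set.Icc x₀ x₁ ⊆ Set.Icc (-1 : ℝ) 1 →
    ∀ y y' y'' : ℝ → ℝ,
      (∀ x ∈ Set.Icc x₀ x₁, HasDerivAt y (y' x) x) →
      (∀ x ∈ Set.Icc x₀ x₁, HasDerivAt y' (y'' x) x) →
      (∀ x ∈ Set.Icc x₀ x₁, 0 ≤ y x ∧ y x ≤ f x) →
      (∀ x ∈ Set.Icc x₀ x₁, 1 / 4 ≤ y' x) →
      (∀ x ∈ Set.Icc x₀ x₁, |y'' x| ≤ H * k / f x) →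
      -Real.log (f ((x₀ + x₁) / 2)) - K * (y ((x₀ + x₁) / 2) / f ((x₀ + x₁) / 2)) ^ 2 ≥
        (1 / 2) * (-Real.log (f x₀) - K * (y x₀ / f x₀) ^ 2) +
        (1 / 2) * (-Real.log (f x₁) - K * (y x₁ / f x₁) ^ 2) +
        K * (x₁ - x₀) ^ 2 / (128 * (f x₁) ^ 2) := by
  intro H hH
  refine ⟨1 / 16 / (9 + 2 * H), by positivity, ?_⟩
  intro ε k K hε hεk hk hK φ _ hφ0 hφ1 _ hφ f f' hf hf' hf'a hfa x₀ x₁ hx hsub y y' y''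
    hy hy' hyf hy4 hyH
  exact stmt_3_general ((le_div_iff₀' (by positivity)).1 hk.le) hK hx.le
    (isProfile_of_integral_eq hφ0 hφ1 hφ hf hf' hf'a (hfa ▸ hε) (hfa ▸ hεk.le)
      (by norm_num) hsub)
    ⟨fun x h ↦ (hy x h).hasDerivWithinAt, fun x h ↦ (hy' x h).hasDerivWithinAt, hyf, hy4, hyH⟩
end

section
/- For every constant H ≥ 0 there exists k₀ > 0 such that the following holds for all ε, k with 0 < ε < k < k₀ and all K ≥ 1. Let [x₀,x₁] ⊆ [−1,1] with x₀ < x₁ and let y : [x₀,x₁] → ℝ be a C² function with 0 ≤ y(x) ≤ f(x), y'(x) ≥ 1/4 and |y''(x)| ≤ H·k/f(x) for every x ∈ [x₀,x₁]. Then K·(y((x₀+x₁)/2)/f((x₀+x₁)/2))² ≤ (K/2)·(y(x₀)/f(x₀))² + (K/2)·(y(x₁)/f(x₁))² − K·(x₁−x₀)²/(128·f(x₁)²). -/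
/-!
Write `u = y / f`, so that `u' = (y' - u f') / f` and `u'' = (y'' - 2 u' f' - u f'') / f`. Then
`f² (u² / 2)'' = (y' - u f')² + u (f y'' - 2 f' (y' - u f') - u f f'')`. Since `0 ≤ u ≤ 1` and
`f'`, `f f''` and the negative part of `f y''` are all `O(k)`, the term `y'² ≥ 1/16` dominates: for
small `k` the right-hand side is at least `1/32`. So `u²` is strongly convex on `[x₀, x₁]` with
modulus `1 / (16 f(x₁)²)`, and the claim is strong convexity at the midpoint.
-/

open Set MeasureTheory

section StrongConvexity

theorem strongConvexOn_of_hasDerivWithinAt2_ge {s : Set ℝ} (hs : Convex ℝ s) {g g' g'' : ℝ → ℝ}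
    {m : ℝ} (hg : ∀ x ∈ s, HasDerivWithinAt g (g' x) s x)
    (hg' : ∀ x ∈ s, HasDerivWithinAt g' (g'' x) s x) (hm : ∀ x ∈ s, m ≤ g'' x) :
    StrongConvexOn s m g := by
  have hd : ∀ x ∈ s, HasDerivWithinAt (fun x => g x - m / 2 * x ^ 2) (g' x - m * x) s x :=
    fun x hx => ((hg x hx).sub ((hasDerivWithinAt_id x s).pow 2 |>.const_mul (m / 2))).congr_deriv
      (by simp only [id, Nat.cast_ofNat]; ring)
  have hd' : ∀ x ∈ s, HasDerivWithinAt (fun x => g' x - m * x) (g'' x - m) s x :=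
    fun x hx => ((hg' x hx).sub ((hasDerivWithinAt_id x s).const_mul m)).congr_deriv (by ring)
  simp only [strongConvexOn_iff_convex, Real.norm_eq_abs, sq_abs]
  exact convexOn_of_hasDerivWithinAt2_nonneg hs (fun x hx => (hd x hx).continuousWithinAt)
    (fun x hx => (hd x (interior_subset hx)).mono interior_subset)
    (fun x hx => (hd' x (interior_subset hx)).mono interior_subset)
    (fun x hx => sub_nonneg.2 (hm x (interior_subset hx)))

theorem strongConvexOn_map_midpoint_le {E : Type*} [NormedAddCommGroup E] [NormedSpace ℝ E]
    {s : Set E} {m : ℝ} {g : E → ℝ} (hg : StrongConvexOn s m g) {x y : E} (hx : x ∈ s)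
    (hy : y ∈ s) : g (midpoint ℝ x y) ≤ (g x + g y) / 2 - m / 8 * ‖x - y‖ ^ 2 := by
  have h := hg.2 hx hy (show (0 : ℝ) ≤ ⅟2 by norm_num) (show (0 : ℝ) ≤ ⅟2 by norm_num)
    (by norm_num)
  rw [← smul_add, ← midpoint_eq_smul_add] at h
  simp only [smul_eq_mul, invOf_eq_inv] at h
  linarith

end StrongConvexity

section SecondDerivatives

variable {𝕜 : Type*} [NontriviallyNormedField 𝕜] {s : Set 𝕜} {x : 𝕜}

theorem hasDerivWithinAt_div {y f : 𝕜 → 𝕜} {y' f' : 𝕜} (hy : HasDerivWithinAt y y' s x)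
    (hf : HasDerivWithinAt f f' s x) (hfx : f x ≠ 0) :
    HasDerivWithinAt (fun t => y t / f t) ((y' - y x / f x * f') / f x) s x :=
  (hy.div hf hfx).congr_deriv (by field_simp)

theorem hasDerivWithinAt_deriv_div {y y' f f' : 𝕜 → 𝕜} {y'' f'' : 𝕜}
    (hy : HasDerivWithinAt y (y' x) s x) (hy' : HasDerivWithinAt y' y'' s x)
    (hf : HasDerivWithinAt f (f' x) s x) (hf' : HasDerivWithinAt f' f'' s x) (hfx : f x ≠ 0) :
    HasDerivWithinAt (fun t => (y' t - y t / f t * f' t) / f t)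
      ((y'' - 2 * f' x * ((y' x - y x / f x * f' x) / f x) - y x / f x * f'') / f x) s x :=
  (hasDerivWithinAt_div (hy'.sub ((hasDerivWithinAt_div hy hf hfx).mul hf')) hf hfx).congr_deriv
    (by simp only [Pi.sub_apply, Pi.mul_apply]; ring)

theorem hasDerivWithinAt_sq {u : 𝕜 → 𝕜} {u' : 𝕜} (hu : HasDerivWithinAt u u' s x) :
    HasDerivWithinAt (fun t => u t ^ 2) (2 * (u x * u')) s x :=
  (hu.pow 2).congr_deriv (by simp only [Nat.cast_ofNat]; ring)

theorem hasDerivWithinAt_deriv_sq {u u' : 𝕜 → 𝕜} {u'' : 𝕜} (hu : HasDerivWithinAt u (u' x) s x)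
    (hu' : HasDerivWithinAt u' u'' s x) :
    HasDerivWithinAt (fun t => 2 * (u t * u' t)) (2 * (u' x ^ 2 + u x * u'')) s x :=
  ((hu.mul hu').const_mul 2).congr_deriv (by ring)

end SecondDerivatives

section SquaredQuotient

variable {v p h b : ℝ}

theorem sq_sub_le_sq_add_mul_of_mem_Icc {u y' f' w c : ℝ} (hpv : 2 * p ≤ v) (hh : 0 ≤ h)
    (hb : 0 ≤ b) (hu : u ∈ Icc (0 : ℝ) 1) (hf' : f' ∈ Icc 0 p) (hy' : v ≤ y') (hw : -h ≤ w)
    (hc : c ≤ b) :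
    v ^ 2 - 4 * p * v - h - b ≤ (y' - u * f') ^ 2 + u * (w - 2 * f' * (y' - u * f') - u * c) := by
  obtain ⟨hu₀, hu₁⟩ := hu
  obtain ⟨hf'₀, hf'p⟩ := hf'
  have hcross : u * f' * y' ≤ p * y' := by
    have : u * f' ≤ p := (mul_le_of_le_one_left hf'₀ hu₁).trans hf'p
    exact mul_le_mul_of_nonneg_right this (by linarith)
  have hmain : v ^ 2 - 4 * p * v ≤ y' ^ 2 - 4 * p * y' := by
    nlinarith [mul_nonneg (sub_nonneg.2 hy') (by linarith : 0 ≤ y' + v - 4 * p)]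
  have hlower : -h ≤ u * w := by nlinarith
  have hupper : u ^ 2 * c ≤ b := by
    have : u ^ 2 ≤ 1 := pow_le_one₀ hu₀ hu₁
    nlinarith [sq_nonneg u]
  linarith [sq_nonneg (u * f')]

theorem strongConvexOn_sq_div {s : Set ℝ} (hs : Convex ℝ s) {δ M : ℝ} {y y' y'' f f' f'' : ℝ → ℝ}
    (hpv : 2 * p ≤ v) (hh : 0 ≤ h) (hb : 0 ≤ b) (hδ : 0 ≤ δ)
    (hδ_le : δ ≤ v ^ 2 - 4 * p * v - h - b)
    (hf : ∀ x ∈ s, HasDerivWithinAt f (f' x) s x)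
    (hf' : ∀ x ∈ s, HasDerivWithinAt f' (f'' x) s x)
    (hy : ∀ x ∈ s, HasDerivWithinAt y (y' x) s x)
    (hy' : ∀ x ∈ s, HasDerivWithinAt y' (y'' x) s x)
    (hf_mem : ∀ x ∈ s, f x ∈ Ioc 0 M) (hf'_mem : ∀ x ∈ s, f' x ∈ Icc 0 p)
    (hf''_le : ∀ x ∈ s, f x * f'' x ≤ b) (hy_mem : ∀ x ∈ s, y x ∈ Icc 0 (f x))
    (hy'_ge : ∀ x ∈ s, v ≤ y' x) (hy''_ge : ∀ x ∈ s, -h ≤ f x * y'' x) :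
    StrongConvexOn s (2 * δ / M ^ 2) fun x => (y x / f x) ^ 2 := by
  have hf₀ : ∀ x ∈ s, f x ≠ 0 := fun x hx => (hf_mem x hx).1.ne'
  refine strongConvexOn_of_hasDerivWithinAt2_ge hs
    (fun x hx => hasDerivWithinAt_sq (hasDerivWithinAt_div (hy x hx) (hf x hx) (hf₀ x hx)))
    (fun x hx => hasDerivWithinAt_deriv_sq
      (hasDerivWithinAt_div (hy x hx) (hf x hx) (hf₀ x hx))
      (hasDerivWithinAt_deriv_div (hy x hx) (hy' x hx) (hf x hx) (hf' x hx) (hf₀ x hx)))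
    fun x hx => ?_
  obtain ⟨hfx, hfM⟩ := hf_mem x hx
  have hu : y x / f x ∈ Icc (0 : ℝ) 1 :=
    ⟨div_nonneg (hy_mem x hx).1 hfx.le, div_le_one_of_le₀ (hy_mem x hx).2 hfx.le⟩
  have hnum := hδ_le.trans <| sq_sub_le_sq_add_mul_of_mem_Icc hpv hh hb hu (hf'_mem x hx)
    (hy'_ge x hx) (hy''_ge x hx) (hf''_le x hx)
  calc 2 * δ / M ^ 2 ≤ 2 * δ / f x ^ 2 := by gcongr
    _ ≤ 2 * ((y' x - y x / f x * f' x) ^ 2 + y x / f x *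
          (f x * y'' x - 2 * f' x * (y' x - y x / f x * f' x) - y x / f x * (f x * f'' x))) /
        f x ^ 2 := by gcongr
    _ = _ := by field_simp

end SquaredQuotient

section Profile

variable {a b : ℝ} {φ f f' : ℝ → ℝ}

theorem sub_mem_Icc_integral_of_hasDerivWithinAt (hφ : Integrable φ) (hφ₀ : ∀ x, 0 ≤ φ x)
    (hf' : ∀ x ∈ Icc a b, HasDerivWithinAt f' (φ x) (Icc a b) x) {x : ℝ} (hx : x ∈ Icc a b) :
    f' x - f' a ∈ Icc 0 (∫ t, φ t) := by
  have hcont : ContinuousOn f' (Icc a x) := fun t ht =>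
    (hf' t ⟨ht.1, ht.2.trans hx.2⟩).continuousWithinAt.mono (Icc_subset_Icc_right hx.2)
  have hftc : ∫ t in a..x, φ t = f' x - f' a :=
    intervalIntegral.integral_eq_sub_of_hasDerivAt_of_le hx.1 hcont
      (fun t ht => (hf' t ⟨ht.1.le, ht.2.le.trans hx.2⟩).hasDerivAt
        (Icc_mem_nhds ht.1 (ht.2.trans_le hx.2)))
      hφ.intervalIntegrable
  rw [← hftc, intervalIntegral.integral_of_le hx.1]
  exact ⟨integral_nonneg hφ₀, setIntegral_le_integral hφ (.of_forall hφ₀)⟩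

theorem monotoneOn_Icc_of_hasDerivWithinAt_nonneg
    (hf : ∀ x ∈ Icc a b, HasDerivWithinAt f (f' x) (Icc a b) x) (hf' : ∀ x ∈ Icc a b, 0 ≤ f' x) :
    MonotoneOn f (Icc a b) :=
  monotoneOn_of_hasDerivWithinAt_nonneg (convex_Icc a b) (fun x hx => (hf x hx).continuousWithinAt)
    (fun x hx => (hf x (interior_subset hx)).mono interior_subset)
    (fun x hx => hf' x (interior_subset hx))

theorem le_add_mul_sub_of_hasDerivWithinAt_mem_Icc {k : ℝ}
    (hf : ∀ x ∈ Icc a b, HasDerivWithinAt f (f' x) (Icc a b) x)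
    (hf' : ∀ x ∈ Icc a b, f' x ∈ Icc 0 k) {x : ℝ} (hx : x ∈ Icc a b) :
    f x ≤ f a + k * (x - a) := by
  have hbound : ∀ t ∈ Ico a b, ‖f' t‖ ≤ k := fun t ht => by
    obtain ⟨h₀, hk⟩ := hf' t (Ico_subset_Icc_self ht)
    rwa [Real.norm_of_nonneg h₀]
  have hnorm := norm_image_sub_le_of_norm_deriv_le_segment' hf hbound x hx
  linarith [Real.le_norm_self (f x - f a)]

end Profile

theorem stmt_4_general (H : ℝ) (hH : 0 ≤ H) :
    ∃ k₀ > (0 : ℝ), ∀ ε k K : ℝ, 0 < ε → ε < k → k < k₀ → 0 ≤ K →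
    ∀ φ : ℝ → ℝ, (∀ x, 0 ≤ φ x) → (∀ x, φ x ≤ 1) → (∫ x, φ x) = k →
    ∀ f f' : ℝ → ℝ,
      (∀ x ∈ Icc (-1 : ℝ) 1, HasDerivWithinAt f (f' x) (Icc (-1) 1) x) →
      (∀ x ∈ Icc (-1 : ℝ) 1, HasDerivWithinAt f' (φ x) (Icc (-1) 1) x) →
      f' (-1) = 0 → f (-1) = ε →
    ∀ x₀ x₁ : ℝ, x₀ < x₁ → Icc x₀ x₁ ⊆ Icc (-1 : ℝ) 1 →
    ∀ y y' y'' : ℝ → ℝ,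
      (∀ x ∈ Icc x₀ x₁, HasDerivWithinAt y (y' x) (Icc x₀ x₁) x) →
      (∀ x ∈ Icc x₀ x₁, HasDerivWithinAt y' (y'' x) (Icc x₀ x₁) x) →
      (∀ x ∈ Icc x₀ x₁, 0 ≤ y x ∧ y x ≤ f x) →
      (∀ x ∈ Icc x₀ x₁, 1 / 4 ≤ y' x) →
      (∀ x ∈ Icc x₀ x₁, -(H * k / f x) ≤ y'' x) →
      K * (y ((x₀ + x₁) / 2) / f ((x₀ + x₁) / 2)) ^ 2 ≤
        (K / 2) * (y x₀ / f x₀) ^ 2 + (K / 2) * (y x₁ / f x₁) ^ 2 -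
        K * (x₁ - x₀) ^ 2 / (128 * (f x₁) ^ 2) := by
  refine ⟨1 / (32 * (H + 4)), by positivity, fun ε k K hε hεk hk hK φ hφ₀ hφ₁ hφ_int f f' hf hf'
    hf'_left hf_left x₀ x₁ hx hsub y y' y'' hy hy' hy_mem hy'_ge hy''_ge => ?_⟩
  have hk_pos : 0 < k := hε.trans hεk
  have hk_small : k * (32 * (H + 4)) < 1 := (lt_div_iff₀ (by positivity)).1 hk
  have hφ : Integrable φ := .of_integral_ne_zero (hφ_int ▸ hk_pos.ne')
  have hf'_mem : ∀ x ∈ Icc (-1 : ℝ) 1, f' x ∈ Icc 0 k := fun x hx => by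
    simpa only [hf'_left, sub_zero, hφ_int] using
      sub_mem_Icc_integral_of_hasDerivWithinAt hφ hφ₀ hf' hx
  have hf_mono := monotoneOn_Icc_of_hasDerivWithinAt_nonneg hf fun x hx => (hf'_mem x hx).1
  have hf_pos : ∀ x ∈ Icc (-1 : ℝ) 1, 0 < f x := fun x hx =>
    hε.trans_le (hf_left ▸ hf_mono (left_mem_Icc.2 (by norm_num)) hx hx.1)
  have hf_le : ∀ x ∈ Icc (-1 : ℝ) 1, f x ≤ 3 * k := fun x hx => by
    nlinarith [le_add_mul_sub_of_hasDerivWithinAt_mem_Icc hf hf'_mem hx, hx.2]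
  have hx₁ := right_mem_Icc.2 hx.le
  have hconv : StrongConvexOn (Icc x₀ x₁) (2 * (1 / 32) / f x₁ ^ 2) fun x => (y x / f x) ^ 2 :=
    strongConvexOn_sq_div (v := 1 / 4) (p := k) (h := H * k) (b := 3 * k) (convex_Icc x₀ x₁)
      (by nlinarith) (by positivity) (by positivity) (by norm_num) (by linarith)
      (fun x hx => (hf x (hsub hx)).mono hsub) (fun x hx => (hf' x (hsub hx)).mono hsub) hy hy'
      (fun x hx => ⟨hf_pos x (hsub hx), hf_mono (hsub hx) (hsub hx₁) hx.2⟩)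
      (fun x hx => hf'_mem x (hsub hx))
      (fun x hx => (mul_le_of_le_one_right (hf_pos x (hsub hx)).le (hφ₁ x)).trans
        (hf_le x (hsub hx)))
      hy_mem hy'_ge
      (fun x hx => by
        rw [← div_le_iff₀' (hf_pos x (hsub hx)), neg_div]
        exact hy''_ge x hx)
  have hmid := strongConvexOn_map_midpoint_le hconv (left_mem_Icc.2 hx.le) hx₁
  rw [midpoint_eq_smul_add, smul_eq_mul, invOf_eq_inv, inv_mul_eq_div, Real.norm_eq_abs, sq_abs]
    at hmid
  refine (mul_le_mul_of_nonneg_left hmid hK).trans_eq ?_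
  ring

theorem stmt_4 :
    ∀ H : ℝ, 0 ≤ H → ∃ k₀ > (0 : ℝ), ∀ ε k K : ℝ, 0 < ε → ε < k → k < k₀ → 1 ≤ K →
    ∀ φ : ℝ → ℝ, Continuous φ → (∀ x, 0 ≤ φ x) → (∀ x, φ x ≤ 1) →
      (∀ x, x ∉ Set.Icc (-k) k → φ x = 0) → (∫ x, φ x) = k →
    ∀ f f' : ℝ → ℝ, (∀ x, HasDerivAt f (f' x) x) → (∀ x, HasDerivAt f' (φ x) x) →
      f' (-1) = 0 → f (-1) = ε →
    ∀ x₀ x₁ : ℝ, x₀ < x₁ → Set.Icc x₀ x₁ ⊆ Set.Icc (-1 : ℝ) 1 →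
    ∀ y y' y'' : ℝ → ℝ,
      (∀ x ∈ Set.Icc x₀ x₁, HasDerivAt y (y' x) x) →
      (∀ x ∈ Set.Icc x₀ x₁, HasDerivAt y' (y'' x) x) →
      (∀ x ∈ Set.Icc x₀ x₁, 0 ≤ y x ∧ y x ≤ f x) →
      (∀ x ∈ Set.Icc x₀ x₁, 1 / 4 ≤ y' x) →
      (∀ x ∈ Set.Icc x₀ x₁, |y'' x| ≤ H * k / f x) →
      K * (y ((x₀ + x₁) / 2) / f ((x₀ + x₁) / 2)) ^ 2 ≤
        (K / 2) * (y x₀ / f x₀) ^ 2 + (K / 2) * (y x₁ / f x₁) ^ 2 -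
        K * (x₁ - x₀) ^ 2 / (128 * (f x₁) ^ 2) := by
  intro H hH
  obtain ⟨k₀, hk₀, hgen⟩ := stmt_4_general H hH
  exact ⟨k₀, hk₀, fun ε k K hε hεk hk hK φ _ hφ₀ hφ₁ _ hφ_int f f' hf hf' hf'_left hf_left
    x₀ x₁ hx hsub y y' y'' hy hy' hy_mem hy'_ge hy''_abs =>
    hgen ε k K hε hεk hk (zero_le_one.trans hK) φ hφ₀ hφ₁ hφ_int f f'
      (fun x _ => (hf x).hasDerivWithinAt) (fun x _ => (hf' x).hasDerivWithinAt) hf'_left hf_left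
      x₀ x₁ hx hsub y y' y'' (fun x hx => (hy x hx).hasDerivWithinAt)
      (fun x hx => (hy' x hx).hasDerivWithinAt) hy_mem hy'_ge
      (fun x hx => (abs_le.1 (hy''_abs x hx)).1)⟩
end

section
/- Let x ∈ [−1,1] and δ > 0 be such that x−δ ∈ [−1,1] and x+δ ∈ [−1,1]. Then |f(x)/f(x−δ) + f(x)/f(x+δ) − 2| ≤ (2k² + f(x))·δ² / (f(x−δ)·f(x+δ)). -/
/-!
Write `a = f (x - δ)`, `c = f x`, `b = f (x + δ)`. Then

  `c / a + c / b - 2 = (2 (c - a) (b - c) - c (a + b - 2 c)) / (a b)`,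

so the left side is controlled by the two first differences, which are at most `k δ` because
`|f'| ≤ ∫ |f''| = k`, and by the second difference, which is at most `δ²` because `|f''| ≤ 1`.
-/

open MeasureTheory Set

section NormedSpace

variable {E : Type*} [NormedAddCommGroup E] [NormedSpace ℝ E]

theorem norm_sub_le_integral_norm_of_hasDerivAt [CompleteSpace E] {g g' : ℝ → E}
    (hg : ∀ t, HasDerivAt g (g' t) t) (hg' : Integrable g') (a b : ℝ) :
    ‖g b - g a‖ ≤ ∫ t, ‖g' t‖ :=
  calc
    ‖g b - g a‖ = ‖∫ t in a..b, g' t‖ := by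
      rw [intervalIntegral.integral_eq_sub_of_hasDerivAt (fun t _ ↦ hg t) hg'.intervalIntegrable]
    _ ≤ ∫ t in uIoc a b, ‖g' t‖ := intervalIntegral.norm_integral_le_integral_norm_uIoc
    _ ≤ ∫ t, ‖g' t‖ := setIntegral_le_integral hg'.norm (.of_forall fun _ ↦ norm_nonneg _)

variable {f f' f'' : ℝ → E} {L x δ : ℝ}

theorem norm_add_sub_two_smul_le_of_norm_deriv2_le (hδ : 0 ≤ δ)
    (hf : ∀ t ∈ Icc (x - δ) (x + δ), HasDerivAt f (f' t) t)
    (hf' : ∀ t ∈ Icc (x - δ) (x + δ), HasDerivAt f' (f'' t) t)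
    (hL : ∀ t ∈ Icc (x - δ) (x + δ), ‖f'' t‖ ≤ L) :
    ‖f (x - δ) + f (x + δ) - (2 : ℝ) • f x‖ ≤ L * δ ^ 2 := by
  have mem_sub : ∀ t ∈ Icc 0 δ, x - t ∈ Icc (x - δ) (x + δ) := fun t ht ↦
    ⟨by linarith [ht.2], by linarith [ht.1]⟩
  have mem_add : ∀ t ∈ Icc 0 δ, x + t ∈ Icc (x - δ) (x + δ) := fun t ht ↦
    ⟨by linarith [ht.1], by linarith [ht.2]⟩
  have hasDerivAt_diff : ∀ t ∈ Icc 0 δ, HasDerivAt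
      (fun t ↦ f (x - t) + f (x + t) - (2 : ℝ) • f x) (-f' (x - t) + f' (x + t)) t := fun t ht ↦
    (((hf _ (mem_sub t ht)).comp_const_sub x t).add
      ((hf _ (mem_add t ht)).comp_const_add x t)).sub_const _
  have deriv_diff_le : ∀ t ∈ Ico 0 δ, ‖-f' (x - t) + f' (x + t)‖ ≤ L * (2 * t) := by
    intro t ht
    have ht' := Ico_subset_Icc_self ht
    calc
      ‖-f' (x - t) + f' (x + t)‖ = ‖f' (x + t) - f' (x - t)‖ := by rw [neg_add_eq_sub]
      _ ≤ L * ‖(x + t) - (x - t)‖ :=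
        (convex_Icc _ _).norm_image_sub_le_of_norm_hasDerivWithin_le
          (fun s hs ↦ (hf' s hs).hasDerivWithinAt) hL (mem_sub t ht') (mem_add t ht')
      _ = L * (2 * t) := by
        rw [show (x + t) - (x - t) = 2 * t by ring, Real.norm_of_nonneg (by linarith [ht.1])]
  have hasDerivAt_bound : ∀ t, HasDerivAt (fun t ↦ L * t ^ 2) (L * (2 * t)) t := fun t ↦ by
    simpa using (hasDerivAt_pow 2 t).const_mul L
  exact image_norm_le_of_norm_deriv_right_le_deriv_boundary
    (fun t ht ↦ (hasDerivAt_diff t ht).continuousAt.continuousWithinAt)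
    (fun t ht ↦ (hasDerivAt_diff t (Ico_subset_Icc_self ht)).hasDerivWithinAt)
    (by simp [two_smul]) hasDerivAt_bound deriv_diff_le (right_mem_Icc.2 hδ)

end NormedSpace

theorem monotoneOn_Ici_of_deriv2_nonneg {f f' f'' : ℝ → ℝ} {a : ℝ}
    (hf : ∀ t ∈ Ici a, HasDerivAt f (f' t) t) (hf' : ∀ t ∈ Ici a, HasDerivAt f' (f'' t) t)
    (hf'' : ∀ t ∈ Ici a, 0 ≤ f'' t) (ha : 0 ≤ f' a) : MonotoneOn f (Ici a) := by
  have monotoneOn_deriv : MonotoneOn f' (Ici a) :=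
    monotoneOn_of_hasDerivWithinAt_nonneg (convex_Ici a)
      (fun t ht ↦ (hf' t ht).continuousAt.continuousWithinAt)
      (fun t ht ↦ (hf' t (interior_subset ht)).hasDerivWithinAt)
      (fun t ht ↦ hf'' t (interior_subset ht))
  exact monotoneOn_of_hasDerivWithinAt_nonneg (convex_Ici a)
    (fun t ht ↦ (hf t ht).continuousAt.continuousWithinAt)
    (fun t ht ↦ (hf t (interior_subset ht)).hasDerivWithinAt)
    (fun t ht ↦ ha.trans
      (monotoneOn_deriv self_mem_Ici (interior_subset ht) (interior_subset ht)))

theorem abs_div_add_div_sub_two_le {a b c d s : ℝ} (ha : a ≠ 0) (hb : b ≠ 0)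
    (hca : |c - a| ≤ d) (hbc : |b - c| ≤ d) (hs : |a + b - 2 * c| ≤ s) :
    |c / a + c / b - 2| ≤ (2 * d ^ 2 + s * |c|) / |a * b| := by
  have numerator_le : |2 * ((c - a) * (b - c)) - c * (a + b - 2 * c)| ≤ 2 * d ^ 2 + s * |c| :=
    calc
      |2 * ((c - a) * (b - c)) - c * (a + b - 2 * c)|
          ≤ |2 * ((c - a) * (b - c))| + |c * (a + b - 2 * c)| := abs_sub _ _
      _ = 2 * (|c - a| * |b - c|) + |a + b - 2 * c| * |c| := by
        simp only [abs_mul, Nat.abs_ofNat, mul_comm |c|]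
      _ ≤ 2 * (d * d) + s * |c| := by
        have hd : 0 ≤ d := (abs_nonneg _).trans hca
        gcongr
      _ = 2 * d ^ 2 + s * |c| := by ring
  calc
    |c / a + c / b - 2| = |2 * ((c - a) * (b - c)) - c * (a + b - 2 * c)| / |a * b| := by
      rw [← abs_div]
      congr 1
      field_simp
      ring
    _ ≤ (2 * d ^ 2 + s * |c|) / |a * b| := by gcongr

theorem stmt_5_general {f f' f'' : ℝ → ℝ} {k L x δ : ℝ} (hδ : 0 ≤ δ)
    (hf : ∀ t ∈ Icc (x - δ) (x + δ), HasDerivAt f (f' t) t)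
    (hf' : ∀ t ∈ Icc (x - δ) (x + δ), HasDerivAt f' (f'' t) t)
    (hk : ∀ t ∈ Icc (x - δ) (x + δ), |f' t| ≤ k)
    (hL : ∀ t ∈ Icc (x - δ) (x + δ), |f'' t| ≤ L)
    (hsub : f (x - δ) ≠ 0) (hadd : f (x + δ) ≠ 0) :
    |f x / f (x - δ) + f x / f (x + δ) - 2| ≤
      (2 * k ^ 2 + L * |f x|) * δ ^ 2 / |f (x - δ) * f (x + δ)| := by
  have first_difference_le : ∀ s ∈ Icc (x - δ) (x + δ), ∀ t ∈ Icc (x - δ) (x + δ),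
      |f t - f s| ≤ k * |t - s| := fun s hs t ht ↦
    (convex_Icc _ _).norm_image_sub_le_of_norm_hasDerivWithin_le
      (fun u hu ↦ (hf u hu).hasDerivWithinAt) hk hs ht
  have mem_left : x - δ ∈ Icc (x - δ) (x + δ) := ⟨le_rfl, by linarith⟩
  have mem_mid : x ∈ Icc (x - δ) (x + δ) := ⟨by linarith, by linarith⟩
  have mem_right : x + δ ∈ Icc (x - δ) (x + δ) := ⟨by linarith, le_rfl⟩
  have left_le : |f x - f (x - δ)| ≤ k * δ := by
    simpa [abs_of_nonneg hδ] using first_difference_le _ mem_left _ mem_mid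
  have right_le : |f (x + δ) - f x| ≤ k * δ := by
    simpa [abs_of_nonneg hδ] using first_difference_le _ mem_mid _ mem_right
  have second_difference_le : |f (x - δ) + f (x + δ) - 2 * f x| ≤ L * δ ^ 2 :=
    norm_add_sub_two_smul_le_of_norm_deriv2_le hδ hf hf' hL
  refine (abs_div_add_div_sub_two_le hsub hadd left_le right_le second_difference_le).trans_eq ?_
  ring

theorem stmt_5 (ε k : ℝ) (hε : 0 < ε) (hεk : ε < k) (hk : k < 1 / 2)
    (φ : ℝ → ℝ) (hφc : Continuous φ) (hφ0 : ∀ x, 0 ≤ φ x) (hφ1 : ∀ x, φ x ≤ 1)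
    (hφsupp : ∀ x, x ∉ Set.Icc (-k) k → φ x = 0)
    (hφint : (∫ x, φ x) = k)
    (f f' : ℝ → ℝ)
    (hfd : ∀ x, HasDerivAt f (f' x) x)
    (hfd2 : ∀ x, HasDerivAt f' (φ x) x)
    (hf'm1 : f' (-1) = 0) (hfm1 : f (-1) = ε)
    (x δ : ℝ) (hx : x ∈ Set.Icc (-1 : ℝ) 1) (hδ : 0 < δ)
    (hxm : x - δ ∈ Set.Icc (-1 : ℝ) 1) (hxp : x + δ ∈ Set.Icc (-1 : ℝ) 1) :
    |f x / f (x - δ) + f x / f (x + δ) - 2| ≤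
      (2 * k ^ 2 + f x) * δ ^ 2 / (f (x - δ) * f (x + δ)) := by
  have abs_φ : ∀ t, |φ t| = φ t := fun t ↦ abs_of_nonneg (hφ0 t)
  have abs_f'_le : ∀ t, |f' t| ≤ k := fun t ↦ by
    simpa only [hf'm1, sub_zero, Real.norm_eq_abs, abs_φ, hφint] using
      norm_sub_le_integral_norm_of_hasDerivAt hfd2
        (hφc.integrable_of_hasCompactSupport (.intro isCompact_Icc hφsupp)) (-1) t
  have f_pos : ∀ t ∈ Icc (-1 : ℝ) 1, 0 < f t := fun t ht ↦
    (hfm1 ▸ hε).trans_le <| monotoneOn_Ici_of_deriv2_nonneg (fun t _ ↦ hfd t) (fun t _ ↦ hfd2 t)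
      (fun t _ ↦ hφ0 t) hf'm1.ge self_mem_Ici ht.1 ht.1
  simpa only [one_mul, abs_of_pos (f_pos x hx),
    abs_of_pos (mul_pos (f_pos _ hxm) (f_pos _ hxp))] using
    stmt_5_general hδ.le (fun t _ ↦ hfd t) (fun t _ ↦ hfd2 t) (fun t _ ↦ abs_f'_le t)
      (fun t _ ↦ (abs_φ t).trans_le (hφ1 t)) (f_pos _ hxm).ne' (f_pos _ hxp).ne'
end

section
/- Let μ₀, μ₁ be Borel probability measures on ℝ², absolutely continuous with respect to the 2-dimensional Lebesgue measure, with densities ρ₀ and ρ₁. Let T = (T₁,T₂) : ℝ² → ℝ² be a Borel map with T_#μ₀ = μ₁ which is injective outside a μ₀-null set. Assume: (i) for μ₀-almost every (x,y) there is a neighborhood of (x,y) on which T₁ does not depend on the y-coordinate; (ii) for every y, the map x ↦ T₁(x,y) is nondecreasing; (iii) for every x, the map y ↦ T₂(x,y) is nondecreasing. Then for μ₀-almost every (x,y) the partial derivatives ∂T₁/∂x and ∂T₂/∂y exist at (x,y) and the Jacobi equation ρ₁(T(x,y)) · (∂T₁/∂x)(x,y) · (∂T₂/∂y)(x,y) =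 ρ₀(x,y) holds. -/
open MeasureTheory

/-!
Near almost every point the map has the triangular form `(x, y) ↦ (f x, g (x, y))` with `f` and
`g (x, ·)` monotone. It need not be differentiable as a map of the plane, but the one-dimensional
area formula for monotone functions, applied on vertical slices and then to `f`, still gives
`∫_{T(B)} k = ∫_B f' ∂_y g (k ∘ T)` when both partial derivatives exist on `B`. Points sharing their
value of `f` with another point have `f' = 0`, so their slices do not contribute. By almost
everywhere injectivity `∫_B ρ₀ = ∫_{T(B)} ρ₁`, and comparing the two identities for all `B`
identifies the densities.

Monotonicity also makes `∂_y g` Borel although `g (x, ·)` may be discontinuous: derivatives of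
monotone functions are limits of difference quotients with rational increments.
-/

open Filter Set Topology
open scoped ENNReal NNReal

section Dense

variable {α β : Type*} [LinearOrder α] [TopologicalSpace α] [OrderTopology α] [DenselyOrdered α]
  [Preorder β] [TopologicalSpace β] [OrderClosedTopology β] {φ F : α → β} {s : Set α} {x : α}

lemma le_of_monotone_of_eventually_le_of_dense [NoMaxOrder α] (hφ : Monotone φ) (hs : Dense s)
    (hF : ContinuousAt F x) (h : ∀ᶠ t in 𝓝 x, t ∈ s → φ t ≤ F t) : φ x ≤ F x := by
  have hx : x ∈ closure (Ioi x ∩ s) :=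
    closure_minimal (hs.open_subset_closure_inter isOpen_Ioi) isClosed_closure
      (by rw [closure_Ioi]; exact self_mem_Ici)
  have : (𝓝[Ioi x ∩ s] x).NeBot := mem_closure_iff_nhdsWithin_neBot.1 hx
  refine ge_of_tendsto (hF.mono_left (nhdsWithin_le_nhds (s := Ioi x ∩ s))) ?_
  filter_upwards [self_mem_nhdsWithin, nhdsWithin_le_nhds h] with t ht hφF
  exact (hφ ht.1.le).trans (hφF ht.2)

lemma ge_of_monotone_of_eventually_ge_of_dense [NoMinOrder α] (hφ : Monotone φ) (hs : Dense s)
    (hF : ContinuousAt F x) (h : ∀ᶠ t in 𝓝 x, t ∈ s → F t ≤ φ t) : F x ≤ φ x :=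
  le_of_monotone_of_eventually_le_of_dense (α := αᵒᵈ) (β := βᵒᵈ) hφ.dual hs hF h

end Dense

section MonotoneDeriv

variable {φ : ℝ → ℝ} {c y : ℝ}

lemma hasDerivAt_of_monotone_of_hasDerivWithinAt_dense {s : Set ℝ} (hφ : Monotone φ)
    (hs : Dense s) (h : HasDerivWithinAt φ c s y) : HasDerivAt φ c y := by
  rw [hasDerivAt_iff_isLittleO, Asymptotics.isLittleO_iff]
  intro ε hε
  have hbound : ∀ᶠ t in 𝓝 y, t ∈ s → |φ t - φ y - (t - y) * c| ≤ ε * |t - y| :=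
    eventually_nhdsWithin_iff.1 ((hasDerivWithinAt_iff_isLittleO.1 h).def hε)
  filter_upwards [eventually_eventually_nhds.2 hbound] with x hx
  have upper : φ x ≤ φ y + (x - y) * c + ε * |x - y| := by
    refine le_of_monotone_of_eventually_le_of_dense (F := fun t => φ y + (t - y) * c + ε * |t - y|)
      hφ hs (by fun_prop) (hx.mono fun t ht hts => ?_)
    linarith [(abs_le.1 (ht hts)).2]
  have lower : φ y + (x - y) * c - ε * |x - y| ≤ φ x := by
    refine ge_of_monotone_of_eventually_ge_of_dense (F := fun t => φ y + (t - y) * c - ε * |t - y|)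
      hφ hs (by fun_prop) (hx.mono fun t ht hts => ?_)
    linarith [(abs_le.1 (ht hts)).1]
  rw [Real.norm_eq_abs, Real.norm_eq_abs, smul_eq_mul, abs_le]
  constructor <;> linarith

lemma hasDerivAt_iff_tendsto_slope_rat_of_monotone (hφ : Monotone φ) :
    HasDerivAt φ c y ↔
      Tendsto (fun r : ℚ => (r : ℝ)⁻¹ * (φ (y + r) - φ y)) (𝓝[≠] 0) (𝓝 c) := by
  have htranslate : HasDerivAt φ c y ↔ HasDerivAt (fun t => φ (y + t)) c 0 := by
    simp only [hasDerivAt_iff_tendsto_slope_zero, zero_add, add_zero]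
  have hdense : HasDerivAt (fun t => φ (y + t)) c 0 ↔
      HasDerivWithinAt (fun t => φ (y + t)) c (range ((↑) : ℚ → ℝ)) 0 :=
    ⟨HasDerivAt.hasDerivWithinAt, hasDerivAt_of_monotone_of_hasDerivWithinAt_dense
      (fun _ _ hst => hφ (by gcongr)) Rat.denseRange_cast⟩
  have hfilter : 𝓝[range ((↑) : ℚ → ℝ) \ {0}] 0 = map (↑) (𝓝[≠] (0 : ℚ)) := by
    rw [Rat.isEmbedding_coe_real.map_nhdsWithin_eq,
      image_compl_eq_range_sdiff_image Rat.cast_injective, image_singleton, Rat.cast_zero]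
  rw [htranslate, hdense, hasDerivWithinAt_iff_tendsto_slope, hfilter, tendsto_map'_iff]
  simp [Function.comp_def, slope_def_module]

lemma eq_of_monotone_of_deriv_ne_zero (hφ : Monotone φ) {x : ℝ} (hd : deriv φ x ≠ 0)
    (h : φ x = φ y) : x = y := by
  by_contra hne
  have hconst : ∀ t ∈ uIcc x y, φ t = φ x := fun t ht => by
    simpa [← h] using hφ.mapsTo_uIcc ht
  have hzero : HasDerivWithinAt φ 0 (uIcc x y) x :=
    (hasDerivWithinAt_const x _ (φ x)).congr hconst rfl
  have hderiv : HasDerivWithinAt φ (deriv φ x) (uIcc x y) x :=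
    (differentiableAt_of_deriv_ne_zero hd).hasDerivAt.hasDerivWithinAt
  exact hd ((uniqueDiffOn_uIcc hne x left_mem_uIcc).eq_deriv _ hderiv hzero)

end MonotoneDeriv

section DerivSnd

variable {α : Type*} [MeasurableSpace α] {g : α × ℝ → ℝ}

lemma measurableSet_differentiableAt_snd_of_monotone (hg : Measurable g)
    (hmono : ∀ x, Monotone fun y => g (x, y)) :
    MeasurableSet {z : α × ℝ | DifferentiableAt ℝ (fun y => g (z.1, y)) z.2} := by
  have hiff (z : α × ℝ) : DifferentiableAt ℝ (fun y => g (z.1, y)) z.2 ↔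
      ∃ c, Tendsto (fun r : ℚ => (r : ℝ)⁻¹ * (g (z.1, z.2 + r) - g (z.1, z.2))) (𝓝[≠] 0) (𝓝 c) := by
    simp_rw [← hasDerivAt_iff_tendsto_slope_rat_of_monotone (hmono z.1)]
    exact ⟨fun h => ⟨_, h.hasDerivAt⟩, fun ⟨_, h⟩ => h.differentiableAt⟩
  simp_rw [hiff]
  exact measurableSet_exists_tendsto fun r => by fun_prop

lemma measurable_deriv_snd_of_monotone (hg : Measurable g)
    (hmono : ∀ x, Monotone fun y => g (x, y)) :
    Measurable fun z : α × ℝ => deriv (fun y => g (z.1, y)) z.2 := by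
  classical
  let slopeLimit (z : α × ℝ) : ℝ :=
    limUnder (𝓝[≠] 0) fun r : ℚ => (r : ℝ)⁻¹ * (g (z.1, z.2 + r) - g (z.1, z.2))
  have hslope : Measurable slopeLimit :=
    (StronglyMeasurable.limUnder fun r =>
      Measurable.stronglyMeasurable (by fun_prop)).measurable
  have hderiv : (fun z : α × ℝ => deriv (fun y => g (z.1, y)) z.2) = fun z =>
      if DifferentiableAt ℝ (fun y => g (z.1, y)) z.2 then slopeLimit z else 0 := by
    ext z
    split_ifs with h
    · exact ((hasDerivAt_iff_tendsto_slope_rat_of_monotone (hmono z.1)).1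
        h.hasDerivAt).limUnder_eq.symm
    · exact deriv_zero_of_not_differentiableAt h
  rw [hderiv]
  exact hslope.ite (measurableSet_differentiableAt_snd_of_monotone hg hmono) measurable_const

lemma ae_differentiableAt_snd_of_monotone (μ : Measure α) [SFinite μ] (hg : Measurable g)
    (hmono : ∀ x, Monotone fun y => g (x, y)) :
    ∀ᵐ z ∂μ.prod volume, DifferentiableAt ℝ (fun y => g (z.1, y)) z.2 := by
  rw [Measure.ae_prod_iff_ae_ae (measurableSet_differentiableAt_snd_of_monotone hg hmono)]
  exact Eventually.of_forall fun x => (hmono x).ae_differentiableAt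

end DerivSnd

lemma setLIntegral_prod_eq_lintegral_slice {α β : Type*} [MeasurableSpace α] [MeasurableSpace β]
    {μ : Measure α} {ν : Measure β} [SFinite ν] {s : Set (α × β)} (hs : MeasurableSet s)
    {k : α × β → ℝ≥0∞} (hk : Measurable k) :
    ∫⁻ z in s, k z ∂μ.prod ν = ∫⁻ x, ∫⁻ y in Prod.mk x ⁻¹' s, k (x, y) ∂ν ∂μ := by
  rw [← lintegral_indicator hs, lintegral_prod _ (hk.indicator hs).aemeasurable]
  refine lintegral_congr fun x => ?_
  rw [← lintegral_indicator (measurable_prodMk_left hs)]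
  rfl

section Triangular

/-- The lower triangular map `(x, y) ↦ (f x, g (x, y))`, the local form of the transport map. -/
def triangularMap {α β γ δ : Type*} (f : α → γ) (g : α × β → δ) (z : α × β) : γ × δ :=
  (f z.1, g z)

lemma preimage_prodMk_image_triangularMap {α β γ δ : Type*} {f : α → γ} {g : α × β → δ} {x : α}
    (hx : ∀ x', f x = f x' → x = x') (s : Set (α × β)) :
    Prod.mk (f x) ⁻¹' (triangularMap f g '' s) = (fun y => g (x, y)) '' (Prod.mk x ⁻¹' s) := by
  ext v
  constructor
  · rintro ⟨⟨x', y⟩, hz, hzv⟩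
    obtain ⟨hfst, hsnd⟩ := Prod.ext_iff.1 hzv
    obtain rfl := hx x' hfst.symm
    exact ⟨y, hz, hsnd⟩
  · rintro ⟨y, hy, rfl⟩
    exact ⟨(x, y), hy, rfl⟩

variable {f : ℝ → ℝ} {g : ℝ × ℝ → ℝ} {s : Set (ℝ × ℝ)}

lemma deriv_mul_lintegral_slice_image_triangularMap (hf : Monotone f)
    (hg : ∀ x, Monotone fun y => g (x, y)) (hs : MeasurableSet s)
    (hdg : ∀ z ∈ s, DifferentiableAt ℝ (fun y => g (z.1, y)) z.2)
    (k : ℝ × ℝ → ℝ≥0∞) (x : ℝ) :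
    ENNReal.ofReal (deriv f x) *
        ∫⁻ v in Prod.mk (f x) ⁻¹' (triangularMap f g '' s), k (f x, v) =
      ∫⁻ y in Prod.mk x ⁻¹' s, ENNReal.ofReal (deriv f x) *
        (ENNReal.ofReal (deriv (fun y => g (x, y)) y) * k (triangularMap f g (x, y))) := by
  rw [lintegral_const_mul' _ _ ENNReal.ofReal_ne_top]
  by_cases hx : deriv f x = 0
  · simp [hx]
  congr 1
  rw [preimage_prodMk_image_triangularMap fun x' => eq_of_monotone_of_deriv_ne_zero hf hx]
  exact lintegral_image_eq_lintegral_deriv_mul_of_monotoneOn (measurable_prodMk_left hs)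
    (fun y hy => (hdg (x, y) hy).hasDerivAt.hasDerivWithinAt) ((hg x).monotoneOn _)
    fun v => k (f x, v)

theorem setLIntegral_image_triangularMap (hf : Monotone f) (hgm : Measurable g)
    (hg : ∀ x, Monotone fun y => g (x, y)) (hs : MeasurableSet s)
    (himage : MeasurableSet (triangularMap f g '' s))
    (hdf : ∀ z ∈ s, DifferentiableAt ℝ f z.1)
    (hdg : ∀ z ∈ s, DifferentiableAt ℝ (fun y => g (z.1, y)) z.2)
    {k : ℝ × ℝ → ℝ≥0∞} (hk : Measurable k) :
    ∫⁻ p in triangularMap f g '' s, k p =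
      ∫⁻ z in s, ENNReal.ofReal (deriv f z.1) *
        (ENNReal.ofReal (deriv (fun y => g (z.1, y)) z.2) * k (triangularMap f g z)) := by
  let D : Set ℝ := {x | DifferentiableAt ℝ f x}
  let sliceIntegral (u : ℝ) : ℝ≥0∞ := ∫⁻ v in Prod.mk u ⁻¹' (triangularMap f g '' s), k (u, v)
  have hsupport : sliceIntegral.support ⊆ f '' D := by
    refine fun u hu => by_contra fun huD => hu ?_
    have hempty : Prod.mk u ⁻¹' (triangularMap f g '' s) = ∅ :=
      eq_empty_of_forall_notMem fun v ⟨z, hz, hzv⟩ =>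
        huD ⟨z.1, hdf z hz, (Prod.ext_iff.1 hzv).1⟩
    simp only [sliceIntegral, hempty, Measure.restrict_empty, lintegral_zero_measure]
  have hderiv_support :
      (fun x => ENNReal.ofReal (deriv f x) * sliceIntegral (f x)).support ⊆ D := by
    refine fun x hx => by_contra fun hxD => hx ?_
    simp [deriv_zero_of_not_differentiableAt hxD]
  have hderiv_snd := measurable_deriv_snd_of_monotone hgm hg
  have htriangular : Measurable (triangularMap f g) :=
    (hf.measurable.comp measurable_fst).prodMk hgm
  have hintegrand : Measurable fun z : ℝ × ℝ => ENNReal.ofReal (deriv f z.1) *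
      (ENNReal.ofReal (deriv (fun y => g (z.1, y)) z.2) * k (triangularMap f g z)) := by
    fun_prop
  calc ∫⁻ p in triangularMap f g '' s, k p
      = ∫⁻ u, sliceIntegral u := setLIntegral_prod_eq_lintegral_slice himage hk
    _ = ∫⁻ u in f '' D, sliceIntegral u := (setLIntegral_eq_of_support_subset hsupport).symm
    _ = ∫⁻ x in D, ENNReal.ofReal (deriv f x) * sliceIntegral (f x) :=
      lintegral_image_eq_lintegral_deriv_mul_of_monotoneOn (measurableSet_of_differentiableAt ℝ f)
        (fun x hx => hx.hasDerivAt.hasDerivWithinAt) (hf.monotoneOn _) _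
    _ = ∫⁻ x, ENNReal.ofReal (deriv f x) * sliceIntegral (f x) :=
      setLIntegral_eq_of_support_subset hderiv_support
    _ = ∫⁻ x, ∫⁻ y in Prod.mk x ⁻¹' s, ENNReal.ofReal (deriv f x) *
          (ENNReal.ofReal (deriv (fun y => g (x, y)) y) * k (triangularMap f g (x, y))) :=
      lintegral_congr (deriv_mul_lintegral_slice_image_triangularMap hf hg hs hdg k)
    _ = ∫⁻ z in s, ENNReal.ofReal (deriv f z.1) *
          (ENNReal.ofReal (deriv (fun y => g (z.1, y)) z.2) * k (triangularMap f g z)) :=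
      (setLIntegral_prod_eq_lintegral_slice hs hintegrand).symm

end Triangular

section Transport

variable {α β : Type*} [MeasurableSpace α] {T : α → β} {N : Set α}

lemma measure_preimage_image_of_injOn_compl_null {μ : Measure α} (hN : μ N = 0)
    (hinj : InjOn T Nᶜ) {s : Set α} (hs : s ⊆ Nᶜ) : μ (T ⁻¹' (T '' s)) = μ s := by
  refine measure_congr ?_
  filter_upwards [measure_eq_zero_iff_ae_notMem.1 hN] with x hx
  exact propext ⟨fun ⟨x', hx', h⟩ => hinj (hs hx') hx h ▸ hx', fun h => mem_image_of_mem T h⟩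

variable [MeasurableSpace β] [StandardBorelSpace α] [MeasurableSpace.CountablySeparated β]
  {ν₀ : Measure α} {ν₁ : Measure β} {ρ₀ : α → ℝ≥0∞} {ρ₁ : β → ℝ≥0∞}

lemma setLIntegral_image_eq_of_map_withDensity_eq (hT : Measurable T)
    (hpush : (ν₀.withDensity ρ₀).map T = ν₁.withDensity ρ₁)
    (hN : ν₀.withDensity ρ₀ N = 0) (hinj : InjOn T Nᶜ) {s : Set α} (hs : MeasurableSet s)
    (hsN : s ⊆ Nᶜ) : ∫⁻ y in T '' s, ρ₁ y ∂ν₁ = ∫⁻ x in s, ρ₀ x ∂ν₀ := by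
  have himage : MeasurableSet (T '' s) := hs.image_of_measurable_injOn hT (hinj.mono hsN)
  rw [← withDensity_apply _ himage, ← hpush, Measure.map_apply hT himage,
    measure_preimage_image_of_injOn_compl_null hN hinj hsN, withDensity_apply _ hs]

lemma ae_density_eq_of_setLIntegral_image_eq [SigmaFinite ν₀] (hT : Measurable T)
    (hρ₀ : Measurable ρ₀) (hpush : (ν₀.withDensity ρ₀).map T = ν₁.withDensity ρ₁)
    (hN : ν₀.withDensity ρ₀ N = 0) (hinj : InjOn T Nᶜ) {s : Set α} (hs : MeasurableSet s)
    (hsN : s ⊆ Nᶜ) {d : α → ℝ≥0∞} (hd : Measurable d)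
    (hcov : ∀ t ⊆ s, MeasurableSet t → ∫⁻ y in T '' t, ρ₁ y ∂ν₁ = ∫⁻ x in t, d x ∂ν₀) :
    ∀ᵐ x ∂ν₀, x ∈ s → d x = ρ₀ x := by
  refine (ae_restrict_iff' hs).1 (ae_eq_of_forall_setLIntegral_eq_of_sigmaFinite hd hρ₀ ?_)
  intro t ht _
  rw [Measure.restrict_restrict ht, ← hcov _ inter_subset_right (ht.inter hs),
    setLIntegral_image_eq_of_map_withDensity_eq hT hpush hN hinj (ht.inter hs)
      (inter_subset_right.trans hsN)]

end Transport

lemma ae_of_ae_exists_mem_nhds_ae {α : Type*} [TopologicalSpace α] [SecondCountableTopology α]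
    [MeasurableSpace α] {μ : Measure α} {p : α → Prop}
    (h : ∀ᵐ x ∂μ, ∃ U ∈ 𝓝 x, ∀ᵐ y ∂μ, y ∈ U → p y) : ∀ᵐ x ∂μ, p x := by
  let good : Set α := {x | ∃ U ∈ 𝓝 x, ∀ᵐ y ∂μ, y ∈ U → p y}
  have hbad : μ (good ∩ {x | ¬ p x}) = 0 := by
    refine measure_null_of_locally_null _ fun x ⟨⟨U, hU, hUp⟩, _⟩ => ?_
    refine ⟨{y | ¬ (y ∈ U → p y)}, ?_, ae_iff.1 hUp⟩
    filter_upwards [self_mem_nhdsWithin, nhdsWithin_le_nhds hU] with y hy hyU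
    exact fun h => hy.2 (h hyU)
  filter_upwards [h, measure_eq_zero_iff_ae_notMem.1 hbad] with x hx hxbad
  exact not_not.1 fun hp => hxbad ⟨hx, hp⟩

section Jacobi

variable {ρ₀ ρ₁ : ℝ × ℝ → ℝ≥0∞} {T : ℝ × ℝ → ℝ × ℝ}

lemma ae_jacobi_of_eqOn_triangularMap {f : ℝ → ℝ} {g : ℝ × ℝ → ℝ} (hρ₀ : Measurable ρ₀)
    (hρ₁ : Measurable ρ₁) (hT : Measurable T)
    (hpush : (volume.withDensity ρ₀).map T = volume.withDensity ρ₁)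
    {N : Set (ℝ × ℝ)} (hN : volume.withDensity ρ₀ N = 0) (hinj : InjOn T Nᶜ)
    (hf : Monotone f) (hgm : Measurable g) (hg : ∀ x, Monotone fun y => g (x, y))
    {U : Set (ℝ × ℝ)} (hU : MeasurableSet U) (hTU : EqOn T (triangularMap f g) U) :
    ∀ᵐ z ∂volume.withDensity ρ₀, z ∈ U →
      DifferentiableAt ℝ f z.1 ∧ DifferentiableAt ℝ (fun y => g (z.1, y)) z.2 ∧
      ENNReal.ofReal (deriv f z.1) *
        (ENNReal.ofReal (deriv (fun y => g (z.1, y)) z.2) * ρ₁ (T z)) = ρ₀ z := by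
  obtain ⟨N', hNN', hN'm, hN'⟩ := exists_measurable_superset_of_null hN
  have hinj' : InjOn T N'ᶜ := hinj.mono (compl_subset_compl.2 hNN')
  let D : Set (ℝ × ℝ) :=
    {z | DifferentiableAt ℝ f z.1} ∩ {z | DifferentiableAt ℝ (fun y => g (z.1, y)) z.2}
  have hDm : MeasurableSet D := (measurable_fst (measurableSet_of_differentiableAt ℝ f)).inter
    (measurableSet_differentiableAt_snd_of_monotone hgm hg)
  have hD : ∀ᵐ z, z ∈ D :=
    (Measure.quasiMeasurePreserving_fst.ae hf.ae_differentiableAt).and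
      (ae_differentiableAt_snd_of_monotone volume hgm hg)
  have hcov : ∀ t ⊆ U ∩ D ∩ N'ᶜ, MeasurableSet t → ∫⁻ p in T '' t, ρ₁ p =
      ∫⁻ z in t, ENNReal.ofReal (deriv f z.1) *
        (ENNReal.ofReal (deriv (fun y => g (z.1, y)) z.2) * ρ₁ (T z)) := by
    intro t ht htm
    have htT : EqOn T (triangularMap f g) t := hTU.mono fun z hz => (ht hz).1.1
    have himage : MeasurableSet (triangularMap f g '' t) :=
      htT.image_eq ▸ htm.image_of_measurable_injOn hT (hinj'.mono fun z hz => (ht hz).2)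
    rw [htT.image_eq, setLIntegral_image_triangularMap hf hgm hg htm himage
      (fun z hz => (ht hz).1.2.1) (fun z hz => (ht hz).1.2.2) hρ₁]
    exact setLIntegral_congr_fun htm fun z hz => by simp only [htT hz]
  have hderiv_snd := measurable_deriv_snd_of_monotone hgm hg
  have hdensity := ae_density_eq_of_setLIntegral_image_eq hT hρ₀ hpush hN' hinj'
    ((hU.inter hDm).inter hN'm.compl) inter_subset_right (by fun_prop) hcov
  have hac := withDensity_absolutelyContinuous volume ρ₀
  filter_upwards [hac.ae_le hdensity, hac.ae_le hD, measure_eq_zero_iff_ae_notMem.1 hN'] with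
    z hz hzD hzN hzU
  exact ⟨hzD.1, hzD.2, hz ⟨⟨hzU, hzD⟩, hzN⟩⟩

theorem stmt_6_general (hρ₀ : Measurable ρ₀) (hρ₁ : Measurable ρ₁) (hT : Measurable T)
    (hpush : (volume.withDensity ρ₀).map T = volume.withDensity ρ₁)
    (hinj : ∃ N : Set (ℝ × ℝ), volume.withDensity ρ₀ N = 0 ∧ InjOn T Nᶜ)
    (hloc : ∀ᵐ z ∂volume.withDensity ρ₀,
      ∃ U ∈ 𝓝 z, ∀ p ∈ U, ∀ q ∈ U, p.1 = q.1 → (T p).1 = (T q).1)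
    (hmono1 : ∀ y : ℝ, Monotone fun x => (T (x, y)).1)
    (hmono2 : ∀ x : ℝ, Monotone fun y => (T (x, y)).2) :
    ∀ᵐ z ∂volume.withDensity ρ₀, ∃ a b : ℝ≥0,
      HasDerivAt (fun x => (T (x, z.2)).1) a z.1 ∧
      HasDerivAt (fun y => (T (z.1, y)).2) b z.2 ∧
      ρ₁ (T z) * (a * b) = ρ₀ z := by
  obtain ⟨N, hN, hinj⟩ := hinj
  refine ae_of_ae_exists_mem_nhds_ae (hloc.mono fun z ⟨U, hU, hTU⟩ => ?_)
  obtain ⟨I, J, hI, hzI, hJ, hzJ, hIJ⟩ := mem_nhds_prod_iff'.1 hU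
  have hfst : ∀ w ∈ I ×ˢ J, (T w).1 = (T (w.1, z.2)).1 :=
    fun w hw => hTU w (hIJ hw) (w.1, z.2) (hIJ ⟨hw.1, hzJ⟩) rfl
  refine ⟨I ×ˢ J, prod_mem_nhds (hI.mem_nhds hzI) (hJ.mem_nhds hzJ), ?_⟩
  filter_upwards [ae_jacobi_of_eqOn_triangularMap hρ₀ hρ₁ hT hpush hN hinj (hmono1 z.2) hT.snd
    hmono2 (hI.prod hJ).measurableSet fun w hw => Prod.ext (hfst w hw) rfl] with w hw hwIJ
  obtain ⟨hd1, hd2, hjacobi⟩ := hw hwIJ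
  refine ⟨.mk _ (hmono1 z.2).deriv_nonneg, .mk _ (hmono2 w.1).deriv_nonneg,
    hd1.hasDerivAt.congr_of_eventuallyEq ?_, hd2.hasDerivAt, ?_⟩
  · filter_upwards [hI.mem_nhds hwIJ.1] with x hx
    exact hfst (x, w.2) ⟨hx, hwIJ.2⟩
  · rw [← hjacobi, ENNReal.ofReal_eq_coe_nnreal (hmono1 z.2).deriv_nonneg,
      ENNReal.ofReal_eq_coe_nnreal (hmono2 w.1).deriv_nonneg]
    ring

end Jacobi

theorem stmt_6
    (ρ₀ ρ₁ : ℝ × ℝ → ℝ) (hρ₀m : Measurable ρ₀) (hρ₁m : Measurable ρ₁)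
    (hρ₀0 : ∀ z, 0 ≤ ρ₀ z) (hρ₁0 : ∀ z, 0 ≤ ρ₁ z)
    (μ₀ μ₁ : Measure (ℝ × ℝ))
    (hμ₀ : μ₀ = volume.withDensity fun z => ENNReal.ofReal (ρ₀ z))
    (hμ₁ : μ₁ = volume.withDensity fun z => ENNReal.ofReal (ρ₁ z))
    (hp₀ : IsProbabilityMeasure μ₀) (hp₁ : IsProbabilityMeasure μ₁)
    (T : ℝ × ℝ → ℝ × ℝ) (hTm : Measurable T)
    (hpush : Measure.map T μ₀ = μ₁)
    (hinj : ∃ N : Set (ℝ × ℝ), μ₀ N = 0 ∧ Set.InjOn T Nᶜ)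
    (hloc : ∀ᵐ z ∂μ₀, ∃ U ∈ nhds z, ∀ p ∈ U, ∀ q ∈ U, p.1 = q.1 → (T p).1 = (T q).1)
    (hmono1 : ∀ y : ℝ, Monotone fun x => (T (x, y)).1)
    (hmono2 : ∀ x : ℝ, Monotone fun y => (T (x, y)).2) :
    ∀ᵐ z ∂μ₀, ∃ a b : ℝ,
      HasDerivAt (fun x => (T (x, z.2)).1) a z.1 ∧
      HasDerivAt (fun y => (T (z.1, y)).2) b z.2 ∧
      ρ₁ (T z) * (a * b) = ρ₀ z := by
  subst hμ₀ hμ₁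
  filter_upwards [stmt_6_general hρ₀m.ennreal_ofReal hρ₁m.ennreal_ofReal hTm hpush hinj hloc
    hmono1 hmono2] with z ⟨a, b, ha, hb, hjacobi⟩
  exact ⟨a, b, ha, hb, by simpa [hρ₀0, hρ₁0] using congrArg ENNReal.toReal hjacobi⟩
end

section
/- Let μ₀, μ₁ be Borel probability measures on X, absolutely continuous with respect to m (equivalently, with respect to Lebesgue measure on X), with Lebesgue densities ρ̃₀, ρ̃₁. Let T : X → X and M : X×X → X be Borel maps with T_#μ₀ = μ₁; set S = M∘(id,T) and μ_{1/2} = S_#μ₀, and assume μ_{1/2} is absolutely continuous with Lebesgue density ρ̃_{1/2}. Assume T and S are injective outside μ₀-null sets and satisfy the Jacobi equation: there are nonnegative Borel functions J_T, J_S on X with ρ̃₁(T(z))·J_T(z) = ρ̃₀(z) and ρ̃_{1/2}(S(z))·J_S(z) = ρ̃₀(z) for μ₀-almost every z. If log( m(S(z))·J_S(z) ) ≥ (1/2)·log( m(T(z))·J_T(z) ) + (1/2)·log( m(z) ) for μ₀-almost every z, then Ent(μ_{1/2}) ≤ (1/2)·Ent(μ₀) + (1/2)·Ent(μ₁). -/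
open MeasureTheory

-- The relative entropy `Ent(μ) = ∫ ρ log ρ dm` if `μ = ρ·m ≪ m` (with value `+∞`
-- if the integral diverges or `μ` is not absolutely continuous w.r.t. `m`).
open Classical in
noncomputable def Ent {α : Type*} [MeasurableSpace α] (m μ : Measure α) : EReal :=
  if μ ≪ m ∧ Integrable (llr μ m) μ then ((∫ z, llr μ m z ∂μ : ℝ) : EReal) else ⊤

/-!
Writing `ρ / d` for the density of a measure with respect to `m = d · ν`, the Jacobi equation
`ρ₁(T z) * JT z = ρ₀ z` says `log (d (T z) * JT z) = log (ρ₀ z) - log (ρ₁ (T z) / d (T z))`. So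
the hypothesis on `log (d * J)` is, after cancelling `log (ρ₀ z)`, a pointwise convexity inequality
between the log-likelihood ratios of the three measures at `z`, `T z` and `S z`. Integrating it
against `μ₀` and changing variables gives the entropy inequality. As `m` is finite, `exp` of
the negated log-likelihood ratio is integrable, hence so is the negative part of that ratio: this
makes the entropy of the midpoint measure finite as soon as the other two are.
-/

section RelativeEntropy

variable {α : Type*} [MeasurableSpace α] {m μ : Measure α}

lemma ent_eq_integral_llr (hac : μ ≪ m) (hint : Integrable (llr μ m) μ) :
    Ent m μ = ((∫ z, llr μ m z ∂μ : ℝ) : EReal) :=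
  if_pos ⟨hac, hint⟩

lemma ent_ne_bot : Ent m μ ≠ ⊥ := by
  rw [Ent]
  split_ifs
  exacts [EReal.coe_ne_bot _, top_ne_bot]

lemma coe_mul_ent_ne_bot {a : ℝ} (ha : 0 ≤ a) : (a : EReal) * Ent m μ ≠ ⊥ :=
  (EReal.mul_ne_bot _ _).2 ⟨.inl (EReal.coe_ne_bot a), .inr ent_ne_bot, .inl (EReal.coe_ne_top a),
    .inl (EReal.coe_nonneg.2 ha)⟩

lemma integrable_exp_neg_llr [IsFiniteMeasure m] [SigmaFinite μ] (hac : μ ≪ m) :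
    Integrable (fun z => Real.exp (-llr μ m z)) μ :=
  Measure.integrable_toReal_rnDeriv.congr (exp_neg_llr hac).symm

variable {β : Type*} [MeasurableSpace β] {S : β → α} {ν : Measure β}

lemma ent_map_le_integral [IsFiniteMeasure m] [SigmaFinite (ν.map S)] (hS : Measurable S)
    (hac : ν.map S ≪ m) {g : β → ℝ} (hg : Integrable g ν)
    (hle : ∀ᵐ z ∂ν, llr (ν.map S) m (S z) ≤ g z) :
    Ent m (ν.map S) ≤ ((∫ z, g z ∂ν : ℝ) : EReal) := by
  have hllr : Measurable (llr (ν.map S) m) := measurable_llr _ _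
  have hexp : Integrable (fun z => Real.exp (-llr (ν.map S) m (S z))) ν :=
    (integrable_exp_neg_llr hac).comp_measurable hS
  have hlower (z : β) : -Real.exp (-llr (ν.map S) m (S z)) ≤ llr (ν.map S) m (S z) := by
    linarith [Real.add_one_le_exp (-llr (ν.map S) m (S z))]
  have hint : Integrable (fun z => llr (ν.map S) m (S z)) ν :=
    integrable_of_le_of_le (hllr.comp hS).aestronglyMeasurable (ae_of_all _ hlower) hle hexp.neg hg
  rw [ent_eq_integral_llr hac
      ((integrable_map_measure hllr.aestronglyMeasurable hS.aemeasurable).2 hint),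
    integral_map hS.aemeasurable hllr.aestronglyMeasurable, EReal.coe_le_coe_iff]
  exact integral_mono_ae hint hg hle

lemma ent_map_le_of_llr_le {T S : α → α} {a b : ℝ} [IsFiniteMeasure m] [SigmaFinite (μ.map S)]
    (ha : 0 < a) (hb : 0 < b) (hT : Measurable T) (hS : Measurable S) (hac : μ.map S ≪ m)
    (hle : ∀ᵐ z ∂μ, llr (μ.map S) m (S z) ≤ a * llr μ m z + b * llr (μ.map T) m (T z)) :
    Ent m (μ.map S) ≤ a * Ent m μ + b * Ent m (μ.map T) := by
  by_cases h₀ : μ ≪ m ∧ Integrable (llr μ m) μ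
  swap
  · rw [Ent.eq_def m μ, if_neg h₀, EReal.coe_mul_top_of_pos ha,
      EReal.top_add_of_ne_bot (coe_mul_ent_ne_bot hb.le)]
    exact le_top
  by_cases h₁ : μ.map T ≪ m ∧ Integrable (llr (μ.map T) m) (μ.map T)
  swap
  · rw [Ent.eq_def m (μ.map T), if_neg h₁, EReal.coe_mul_top_of_pos hb,
      EReal.add_top_of_ne_bot (coe_mul_ent_ne_bot ha.le)]
    exact le_top
  have hint₀ : Integrable (fun z => a * llr μ m z) μ := h₀.2.const_mul a
  have hint₁ : Integrable (fun z => b * llr (μ.map T) m (T z)) μ :=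
    (h₁.2.comp_measurable hT).const_mul b
  calc Ent m (μ.map S)
      ≤ ((∫ z, a * llr μ m z + b * llr (μ.map T) m (T z) ∂μ : ℝ) : EReal) :=
        ent_map_le_integral hS hac (hint₀.add hint₁) hle
    _ = ((a * ∫ z, llr μ m z ∂μ + b * ∫ z, llr (μ.map T) m z ∂(μ.map T) : ℝ) : EReal) := by
        rw [integral_add hint₀ hint₁, integral_const_mul, integral_const_mul,
          integral_map hT.aemeasurable (measurable_llr _ _).aestronglyMeasurable]
    _ = a * Ent m μ + b * Ent m (μ.map T) := by
        rw [ent_eq_integral_llr h₀.1 h₀.2, ent_eq_integral_llr h₁.1 h₁.2, EReal.coe_add,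
          EReal.coe_mul, EReal.coe_mul]

end RelativeEntropy

section Densities

variable {α : Type*} [MeasurableSpace α] {ν : Measure α} {d ρ : α → ℝ}

lemma ae_pos_withDensity_ofReal (hρ : AEMeasurable ρ ν) :
    ∀ᵐ z ∂ν.withDensity fun z => ENNReal.ofReal (ρ z), 0 < ρ z :=
  (ae_withDensity_iff' hρ.ennreal_ofReal).2 <|
    ae_of_all _ fun _ hz => ENNReal.ofReal_ne_zero_iff.1 hz

lemma withDensity_ofReal_eq_withDensity_div (hd : AEMeasurable d ν) (hd_pos : ∀ᵐ z ∂ν, 0 < d z)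
    (hρ : AEMeasurable ρ ν) :
    (ν.withDensity fun z => ENNReal.ofReal (ρ z)) =
      (ν.withDensity fun z => ENNReal.ofReal (d z)).withDensity
        fun z => ENNReal.ofReal (ρ z / d z) := by
  have hquot : AEMeasurable (fun z => ENNReal.ofReal (ρ z / d z)) ν := (hρ.div hd).ennreal_ofReal
  rw [← withDensity_mul₀ hd.ennreal_ofReal hquot]
  refine withDensity_congr_ae ?_
  filter_upwards [hd_pos] with z hz
  rw [Pi.mul_apply, ← ENNReal.ofReal_mul hz.le, mul_div_cancel₀ _ hz.ne']

lemma withDensity_ofReal_absolutelyContinuous_of_pos (hd : AEMeasurable d ν)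
    (hd_pos : ∀ᵐ z ∂ν, 0 < d z) :
    (ν.withDensity fun z => ENNReal.ofReal (ρ z)) ≪ ν.withDensity fun z => ENNReal.ofReal (d z) :=
  (withDensity_absolutelyContinuous _ _).trans <|
    withDensity_absolutelyContinuous' hd.ennreal_ofReal <|
      hd_pos.mono fun _ hz => ENNReal.ofReal_ne_zero_iff.2 hz

lemma ae_pos_and_llr_withDensity_eq_log_div
    [SigmaFinite (ν.withDensity fun z => ENNReal.ofReal (d z))]
    (hd : AEMeasurable d ν) (hd_pos : ∀ᵐ z ∂ν, 0 < d z) (hρ : AEMeasurable ρ ν) :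
    ∀ᵐ z ∂ν.withDensity fun z => ENNReal.ofReal (ρ z), 0 < ρ z ∧ 0 < d z ∧
      llr (ν.withDensity fun z => ENNReal.ofReal (ρ z))
        (ν.withDensity fun z => ENNReal.ofReal (d z)) z = Real.log (ρ z / d z) := by
  have hquot : AEMeasurable (fun z => ENNReal.ofReal (ρ z / d z)) ν := (hρ.div hd).ennreal_ofReal
  have hrnDeriv := Measure.rnDeriv_withDensity₀ _ <|
    hquot.mono_ac (withDensity_absolutelyContinuous ν fun z => ENNReal.ofReal (d z))
  have hac := withDensity_ofReal_absolutelyContinuous_of_pos (ρ := ρ) hd hd_pos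
  filter_upwards [ae_pos_withDensity_ofReal hρ,
    (withDensity_absolutelyContinuous _ _).ae_le hd_pos, hac.ae_le hrnDeriv] with z hρz hdz hz
  refine ⟨hρz, hdz, ?_⟩
  rw [llr, withDensity_ofReal_eq_withDensity_div hd hd_pos hρ, hz,
    ENNReal.toReal_ofReal (div_pos hρz hdz).le]

lemma withDensity_restrict_of_ae_mem {X : Set α} (hX : MeasurableSet X) {g : α → ENNReal}
    (hmem : ∀ᵐ z ∂ν.withDensity g, z ∈ X) : (ν.restrict X).withDensity g = ν.withDensity g := by
  rw [← restrict_withDensity hX, Measure.restrict_eq_self_of_ae_mem hmem]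

end Densities

section JacobiEquation

lemma log_mul_jacobian_eq {ρ₀ ρ₁ d J : ℝ} (hρ₀ : 0 < ρ₀) (hρ₁ : 0 < ρ₁) (hd : 0 < d)
    (hJac : ρ₁ * J = ρ₀) : Real.log (d * J) = Real.log ρ₀ - Real.log (ρ₁ / d) := by
  rw [← Real.log_div hρ₀.ne' (div_pos hρ₁ hd).ne', ← hJac]
  congr 1
  field_simp

variable {α : Type*} [MeasurableSpace α] {ν m μ : Measure α} {d ρ₀ ρ₁ ρ₂ JT JS : α → ℝ}
  {T S : α → α} {a b : ℝ}

lemma llr_map_le_of_jacobi [SigmaFinite m] (hab : a + b = 1)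
    (hd : AEMeasurable d ν) (hd_pos : ∀ᵐ z ∂ν, 0 < d z)
    (hm : m = ν.withDensity fun z => ENNReal.ofReal (d z))
    (hρ₀ : AEMeasurable ρ₀ ν) (hρ₁ : AEMeasurable ρ₁ ν) (hρ₂ : AEMeasurable ρ₂ ν)
    (hT : Measurable T) (hS : Measurable S)
    (hμ : μ = ν.withDensity fun z => ENNReal.ofReal (ρ₀ z))
    (hμT : μ.map T = ν.withDensity fun z => ENNReal.ofReal (ρ₁ z))
    (hμS : μ.map S = ν.withDensity fun z => ENNReal.ofReal (ρ₂ z))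
    (hJacT : ∀ᵐ z ∂μ, ρ₁ (T z) * JT z = ρ₀ z) (hJacS : ∀ᵐ z ∂μ, ρ₂ (S z) * JS z = ρ₀ z)
    (hlog : ∀ᵐ z ∂μ,
      a * Real.log (d z) + b * Real.log (d (T z) * JT z) ≤ Real.log (d (S z) * JS z)) :
    ∀ᵐ z ∂μ, llr (μ.map S) m (S z) ≤ a * llr μ m z + b * llr (μ.map T) m (T z) := by
  subst hm
  have hllr₀ := ae_pos_and_llr_withDensity_eq_log_div hd hd_pos hρ₀
  have hllr₁ := ae_pos_and_llr_withDensity_eq_log_div hd hd_pos hρ₁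
  have hllr₂ := ae_pos_and_llr_withDensity_eq_log_div hd hd_pos hρ₂
  rw [← hμ] at hllr₀
  rw [← hμT] at hllr₁
  rw [← hμS] at hllr₂
  filter_upwards [hllr₀, ae_of_ae_map hT.aemeasurable hllr₁, ae_of_ae_map hS.aemeasurable hllr₂,
    hJacT, hJacS, hlog] with z ⟨hρ₀z, hdz, hllr₀z⟩ ⟨hρ₁z, hdTz, hllr₁z⟩ ⟨hρ₂z, hdSz, hllr₂z⟩
    hJacTz hJacSz hlogz
  rw [log_mul_jacobian_eq hρ₀z hρ₁z hdTz hJacTz, log_mul_jacobian_eq hρ₀z hρ₂z hdSz hJacSz]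
    at hlogz
  rw [hllr₀z, hllr₁z, hllr₂z, Real.log_div hρ₀z.ne' hdz.ne']
  linear_combination hlogz - Real.log (ρ₀ z) * hab

theorem stmt_7_general {X : Set α} (ha : 0 < a) (hb : 0 < b) (hab : a + b = 1)
    (hX : MeasurableSet X) (hd_pos : ∀ z ∈ X, 0 < d z) (hd_int : IntegrableOn d X ν)
    (hm : m = ν.withDensity (X.indicator fun z => ENNReal.ofReal (d z))) (hac : μ ≪ m)
    (hρ₀ : Measurable ρ₀) (hρ₁ : Measurable ρ₁) (hρ₂ : Measurable ρ₂)
    (hT : Measurable T) (hTX : Set.MapsTo T X X) (hS : Measurable S) (hSX : Set.MapsTo S X X)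
    (hμ : μ = ν.withDensity fun z => ENNReal.ofReal (ρ₀ z))
    (hμT : μ.map T = ν.withDensity fun z => ENNReal.ofReal (ρ₁ z))
    (hμS : μ.map S = ν.withDensity fun z => ENNReal.ofReal (ρ₂ z))
    (hJacT : ∀ᵐ z ∂μ, ρ₁ (T z) * JT z = ρ₀ z) (hJacS : ∀ᵐ z ∂μ, ρ₂ (S z) * JS z = ρ₀ z)
    (hlog : ∀ᵐ z ∂μ,
      a * Real.log (d z) + b * Real.log (d (T z) * JT z) ≤ Real.log (d (S z) * JS z)) :
    Ent m (μ.map S) ≤ a * Ent m μ + b * Ent m (μ.map T) := by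
  rw [withDensity_indicator hX] at hm
  have hd : AEMeasurable d (ν.restrict X) := hd_int.aemeasurable
  have hd_pos_ae : ∀ᵐ z ∂ν.restrict X, 0 < d z := ae_restrict_of_forall_mem hX hd_pos
  have : IsFiniteMeasure m := hm ▸ isFiniteMeasure_withDensity_ofReal hd_int.2
  have hmem : ∀ᵐ z ∂μ, z ∈ X :=
    hac.ae_le <| hm ▸ (withDensity_absolutelyContinuous _ _).ae_le (ae_restrict_mem hX)
  have hmem_map {F : α → α} (hF : Measurable F) (hFX : Set.MapsTo F X X) :
      ∀ᵐ z ∂μ.map F, z ∈ X :=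
    (ae_map_iff hF.aemeasurable hX).2 (hmem.mono hFX)
  replace hμ := hμ.trans (withDensity_restrict_of_ae_mem hX (hμ ▸ hmem)).symm
  replace hμT := hμT.trans (withDensity_restrict_of_ae_mem hX (hμT ▸ hmem_map hT hTX)).symm
  replace hμS := hμS.trans (withDensity_restrict_of_ae_mem hX (hμS ▸ hmem_map hS hSX)).symm
  have hacS : μ.map S ≪ m := by
    rw [hμS, hm]
    exact withDensity_ofReal_absolutelyContinuous_of_pos hd hd_pos_ae
  have : SigmaFinite (μ.map S) := by
    rw [hμS, withDensity_ofReal_eq_withDensity_div hd hd_pos_ae hρ₂.aemeasurable, ← hm]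
    infer_instance
  exact ent_map_le_of_llr_le ha hb hT hS hacS <| llr_map_le_of_jacobi hab hd hd_pos_ae hm
    hρ₀.aemeasurable hρ₁.aemeasurable hρ₂.aemeasurable hT hS hμ hμT hμS hJacT hJacS hlog

end JacobiEquation

section ReferenceMeasure

lemma isMinOn_univ_of_hasDerivAt_of_hasDerivAt_nonneg {f f' f'' : ℝ → ℝ} {c : ℝ}
    (hf : ∀ x, HasDerivAt f (f' x) x) (hf' : ∀ x, HasDerivAt f' (f'' x) x)
    (hf''_nonneg : ∀ x, 0 ≤ f'' x) (hc : f' c = 0) : IsMinOn f Set.univ c := by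
  have hmono : Monotone f' := monotone_of_hasDerivAt_nonneg hf' hf''_nonneg
  have hdiff : Differentiable ℝ f := fun x => (hf x).differentiableAt
  refine isMinOn_univ_of_deriv hdiff.continuous.continuousAt hdiff.differentiableOn
    hdiff.differentiableOn (fun y hy => ?_) (fun y hy => ?_)
  all_goals
    rw [(hf y).deriv, ← hc]
    exact hmono (le_of_lt hy)

lemma isCompact_region_between_cc {β : Type*} [TopologicalSpace β] [T2Space β] {s : Set β}
    (hs : IsCompact s) {f g : β → ℝ} (hf : Continuous f) (hg : Continuous g) :
    IsCompact {p : β × ℝ | p.1 ∈ s ∧ p.2 ∈ Set.Icc (f p.1) (g p.1)} := by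
  obtain ⟨lo, hlo⟩ := hs.bddBelow_image hf.continuousOn
  obtain ⟨hi, hhi⟩ := hs.bddAbove_image hg.continuousOn
  have hclosed : IsClosed {p : β × ℝ | p.1 ∈ s ∧ p.2 ∈ Set.Icc (f p.1) (g p.1)} :=
    (hs.isClosed.preimage continuous_fst).inter <|
      (isClosed_le (hf.comp continuous_fst) continuous_snd).inter
        (isClosed_le continuous_snd (hg.comp continuous_fst))
  refine (hs.prod (isCompact_Icc (a := lo) (b := hi))).of_isClosed_subset hclosed ?_
  rintro p ⟨hp, hfp, hpg⟩
  exact ⟨hp, (hlo (Set.mem_image_of_mem f hp)).trans hfp,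
    hpg.trans (hhi (Set.mem_image_of_mem g hp))⟩

/-- The density `m(x, y) = (1 / f x) * exp (-K * (y / f x) ^ 2)` of the reference measure: on the
fibre over `x`, an unnormalised Gaussian rescaled to the height `f x` of the fibre. It is meant for
`f x > 0`; where `f x = 0` it takes the junk value `0`. -/
noncomputable def fiberGaussian {β : Type*} (K : ℝ) (f : β → ℝ) (z : β × ℝ) : ℝ :=
  (1 / f z.1) * Real.exp (-K * (z.2 / f z.1) ^ 2)

variable {β : Type*} {K : ℝ} {f : β → ℝ}

lemma fiberGaussian_pos {z : β × ℝ} (hz : 0 < f z.1) : 0 < fiberGaussian K f z := by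
  rw [fiberGaussian]
  positivity

lemma continuous_fiberGaussian [TopologicalSpace β] (hf : Continuous f) (hf_pos : ∀ x, 0 < f x) :
    Continuous (fiberGaussian K f) := by
  have hf_ne (z : β × ℝ) : f z.1 ≠ 0 := (hf_pos z.1).ne'
  unfold fiberGaussian
  fun_prop (disch := exact hf_ne _)

end ReferenceMeasure

theorem stmt_7 (ε k K : ℝ) (hε : 0 < ε) (hεk : ε < k) (hk : k < 1 / 2) (hK : 1 ≤ K)
    (φ : ℝ → ℝ) (hφc : Continuous φ) (hφ0 : ∀ x, 0 ≤ φ x) (hφ1 : ∀ x, φ x ≤ 1)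
    (hφsupp : ∀ x, x ∉ Set.Icc (-k) k → φ x = 0)
    (hφint : (∫ x, φ x) = k)
    (f f' : ℝ → ℝ)
    (hfd : ∀ x, HasDerivAt f (f' x) x)
    (hfd2 : ∀ x, HasDerivAt f' (φ x) x)
    (hf'm1 : f' (-1) = 0) (hfm1 : f (-1) = ε)
    (X : Set (ℝ × ℝ))
    (hX : X = {p : ℝ × ℝ | p.1 ∈ Set.Icc (-1 : ℝ) 1 ∧ 0 ≤ p.2 ∧ p.2 ≤ f p.1})
    -- the density of the reference measure m and the measure m itself
    (mdens : ℝ × ℝ → ℝ)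
    (hmdens : mdens = fun z => (1 / f z.1) * Real.exp (-K * (z.2 / f z.1) ^ 2))
    (m : Measure (ℝ × ℝ))
    (hm : m = volume.withDensity (X.indicator fun z => ENNReal.ofReal (mdens z)))
    -- the marginals, absolutely continuous w.r.t. m, with Lebesgue densities
    (μ₀ μ₁ : Measure (ℝ × ℝ))
    (hp₀ : IsProbabilityMeasure μ₀) (hp₁ : IsProbabilityMeasure μ₁)
    (hac₀ : μ₀ ≪ m) (hac₁ : μ₁ ≪ m)
    (ρ₀ ρ₁ : ℝ × ℝ → ℝ) (hρ₀m : Measurable ρ₀) (hρ₁m : Measurable ρ₁)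
    (hρ₀0 : ∀ z, 0 ≤ ρ₀ z) (hρ₁0 : ∀ z, 0 ≤ ρ₁ z)
    (hμ₀ : μ₀ = volume.withDensity fun z => ENNReal.ofReal (ρ₀ z))
    (hμ₁ : μ₁ = volume.withDensity fun z => ENNReal.ofReal (ρ₁ z))
    -- the transport map T and the midpoint selection M
    (T : ℝ × ℝ → ℝ × ℝ) (hTm : Measurable T) (hTX : ∀ z ∈ X, T z ∈ X)
    (M : (ℝ × ℝ) × (ℝ × ℝ) → ℝ × ℝ) (hMm : Measurable M)
    (hMX : ∀ p ∈ X, ∀ q ∈ X, M (p, q) ∈ X)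
    (S : ℝ × ℝ → ℝ × ℝ) (hS : S = fun z => M (z, T z))
    (hpushT : Measure.map T μ₀ = μ₁)
    -- the midpoint measure, absolutely continuous with Lebesgue density
    (μhalf : Measure (ℝ × ℝ)) (hμhalf : μhalf = Measure.map S μ₀)
    (ρhalf : ℝ × ℝ → ℝ) (hρhm : Measurable ρhalf) (hρh0 : ∀ z, 0 ≤ ρhalf z)
    (hμhd : μhalf = volume.withDensity fun z => ENNReal.ofReal (ρhalf z))
    -- injectivity outside a null set
    (hinjT : ∃ N : Set (ℝ × ℝ), μ₀ N = 0 ∧ Set.InjOn T Nᶜ)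
    (hinjS : ∃ N : Set (ℝ × ℝ), μ₀ N = 0 ∧ Set.InjOn S Nᶜ)
    -- the Jacobi equations
    (JT JS : ℝ × ℝ → ℝ) (hJTm : Measurable JT) (hJSm : Measurable JS)
    (hJT0 : ∀ z, 0 ≤ JT z) (hJS0 : ∀ z, 0 ≤ JS z)
    (hJacT : ∀ᵐ z ∂μ₀, ρ₁ (T z) * JT z = ρ₀ z)
    (hJacS : ∀ᵐ z ∂μ₀, ρhalf (S z) * JS z = ρ₀ z)
    -- the pointwise logarithmic inequality
    (hlog : ∀ᵐ z ∂μ₀,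
      Real.log (mdens (S z) * JS z) ≥
        (1 / 2) * Real.log (mdens (T z) * JT z) + (1 / 2) * Real.log (mdens z)) :
    Ent m μhalf ≤ ((1 / 2 : ℝ) : EReal) * Ent m μ₀ + ((1 / 2 : ℝ) : EReal) * Ent m μ₁ := by
  have hmin : IsMinOn f Set.univ (-1) :=
    isMinOn_univ_of_hasDerivAt_of_hasDerivAt_nonneg hfd hfd2 hφ0 hf'm1
  have hf_pos (x : ℝ) : 0 < f x := (hfm1 ▸ hε).trans_le (hmin (Set.mem_univ x))
  have hf : Continuous f := continuous_iff_continuousAt.2 fun x => (hfd x).continuousAt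
  have hXc : IsCompact X := hX ▸ isCompact_region_between_cc isCompact_Icc continuous_const hf
  have hd : Continuous mdens := hmdens ▸ continuous_fiberGaussian hf hf_pos
  have hd_pos : ∀ z ∈ X, 0 < mdens z := fun z _ => hmdens ▸ fiberGaussian_pos (hf_pos z.1)
  subst hS hμhalf hpushT
  exact stmt_7_general one_half_pos one_half_pos (add_halves 1) hXc.measurableSet hd_pos
    (hd.continuousOn.integrableOn_compact hXc) hm hac₀ hρ₀m hρ₁m hρhm hTm hTX
    (hMm.comp (measurable_id.prodMk hTm)) (fun z hz => hMX z hz _ (hTX z hz)) hμ₀ hμ₁ hμhd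
    hJacT hJacS (hlog.mono fun z hz => (add_comm _ _).trans_le hz)
end

section
/- There exists k₀ > 0 such that for all ε, k with 0 < ε < k < k₀ the following holds. Let (x₀,y₀),(x₁,y₁) ∈ X with x₀ < x₁ and (1/2)·(x₁−x₀) < y₁−y₀ < x₁−x₀. Set ỹ = (1/2)·( y₀/f(x₀) + (y₀ + (x₁−x₀)/2)/f(x₁) )·f((x₀+x₁)/2) − y₀ and ȳ = y₀ + ỹ + ( (x₁−x₀)/2 − ỹ )·( 2·(y₁−y₀)/(x₁−x₀) − 1 ). Then the point p = ((x₀+x₁)/2, ȳ) belongs to X and is a d_∞-midpoint of (x₀,y₀) and (x₁,y₁): d_∞(p,(x₀,y₀)) = d_∞(p,(x₁,y₁)) = (1/2)·d_∞((x₀,y₀),(x₁,y₁)) = (1/2)·(x₁−x₀). -/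
/-!
Carrying a height `y ∈ [0, u]` to a fibre of height `m` at the same relative height `y / u`
displaces it by at most `|m - u|`. Hence, if `f` is `K`-Lipschitz and `L = (x₁ - x₀) / 2`, averaging
the relative heights of two points gives, over their midpoint, the average height up to an error
`K L`. In particular `|ỹ - L / 2| ≤ K L`, which for `K = 1 / 4` places `ỹ` in `[0, (1 - K) L]`.

Writing `y₁ = y₀ + (1 + t) L` with `t ∈ [0, 1]`, we have `ȳ - y₀ = (1 - t) ỹ + t L ∈ [0, L]` and
`y₁ - ȳ = L - (1 - t) ỹ ∈ [K L, L]`. The bounds by `L` say that `p` is a midpoint, and the bound by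
`K L` gives `ȳ ≤ f x₁ - K L ≤ f ((x₀ + x₁) / 2)`, so that `p` stays below the graph of `f`.
-/

open MeasureTheory Set
open scoped NNReal

section Primitives

variable {φ f f' : ℝ → ℝ} {a b : ℝ}

lemma sub_le_integral_of_hasDerivAt (hf' : ∀ x, HasDerivAt f' (φ x) x) (hφ : ∀ x, 0 ≤ φ x)
    (hφi : Integrable φ) (hab : a ≤ b) : f' b - f' a ≤ ∫ x, φ x := by
  rw [← intervalIntegral.integral_eq_sub_of_hasDerivAt (fun x _ ↦ hf' x)
    hφi.intervalIntegrable, intervalIntegral.integral_of_le hab]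
  exact setIntegral_le_integral hφi (.of_forall hφ)

lemma monotoneOn_Ici_of_second_deriv_nonneg (hf : ∀ x, HasDerivAt f (f' x) x)
    (hf' : ∀ x, HasDerivAt f' (φ x) x) (hφ : ∀ x, 0 ≤ φ x) (ha : f' a = 0) :
    MonotoneOn f (Ici a) := by
  have hf'_mono : Monotone f' := monotone_of_hasDerivAt_nonneg hf' hφ
  refine monotoneOn_of_hasDerivWithinAt_nonneg (convex_Ici a)
    (HasDerivAt.continuousOn fun x _ ↦ hf x) (fun x _ ↦ (hf x).hasDerivWithinAt) fun x hx ↦ ?_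
  exact ha.ge.trans (hf'_mono (interior_subset hx))

lemma lipschitzOnWith_Ici_of_integrable_second_deriv (hf : ∀ x, HasDerivAt f (f' x) x)
    (hf' : ∀ x, HasDerivAt f' (φ x) x) (hφ : ∀ x, 0 ≤ φ x) (hφi : Integrable φ) (ha : f' a = 0) :
    LipschitzOnWith (∫ x, φ x).toNNReal f (Ici a) := by
  refine (convex_Ici a).lipschitzOnWith_of_nnnorm_hasDerivWithin_le
    (fun x _ ↦ (hf x).hasDerivWithinAt) fun x hx ↦ ?_
  have h_nonneg : 0 ≤ f' x := ha.ge.trans (monotone_of_hasDerivAt_nonneg hf' hφ hx)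
  have h_le : f' x - f' a ≤ ∫ x, φ x := sub_le_integral_of_hasDerivAt hf' hφ hφi hx
  rw [ha, sub_zero] at h_le
  rw [← norm_toNNReal, Real.norm_of_nonneg h_nonneg]
  exact Real.toNNReal_le_toNNReal h_le

end Primitives

lemma dist_eq_sub_fst {p q : ℝ × ℝ} (h_snd : |q.2 - p.2| ≤ q.1 - p.1) :
    dist p q = q.1 - p.1 := by
  have h_dist : dist p.1 q.1 = q.1 - p.1 := by
    rw [dist_comm, Real.dist_eq, abs_of_nonneg ((abs_nonneg _).trans h_snd)]
  rw [Prod.dist_eq, h_dist, dist_comm p.2, Real.dist_eq, max_eq_left h_snd]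

lemma dist_midpoint_eq_half {x₀ y₀ x₁ y₁ y : ℝ} (h₀ : |y - y₀| ≤ (x₁ - x₀) / 2)
    (h₁ : |y₁ - y| ≤ (x₁ - x₀) / 2) :
    dist ((x₀ + x₁) / 2, y) (x₀, y₀) = (1 / 2) * dist (x₀, y₀) (x₁, y₁) ∧
      dist ((x₀ + x₁) / 2, y) (x₁, y₁) = (1 / 2) * dist (x₀, y₀) (x₁, y₁) ∧
      dist (x₀, y₀) (x₁, y₁) = x₁ - x₀ := by
  have h_ends : dist (x₀, y₀) (x₁, y₁) = x₁ - x₀ :=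
    dist_eq_sub_fst (by linarith [abs_sub_le y₁ y y₀])
  have h_left : dist (x₀, y₀) ((x₀ + x₁) / 2, y) = (x₀ + x₁) / 2 - x₀ :=
    dist_eq_sub_fst (by linarith)
  have h_right : dist ((x₀ + x₁) / 2, y) (x₁, y₁) = x₁ - (x₀ + x₁) / 2 :=
    dist_eq_sub_fst (by linarith)
  refine ⟨?_, ?_, h_ends⟩
  · rw [dist_comm, h_left, h_ends]; ring
  · rw [h_right, h_ends]; ring

lemma abs_div_mul_sub_self_le {y u : ℝ} (hy : 0 ≤ y) (hyu : y ≤ u) (hu : 0 < u) (m : ℝ) :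
    |y / u * m - y| ≤ |m - u| :=
  calc |y / u * m - y| = y / u * |m - u| := by
        have h_factor : y / u * m - y = y / u * (m - u) := by field_simp
        rw [h_factor, abs_mul, abs_of_nonneg (div_nonneg hy hu.le)]
    _ ≤ |m - u| := mul_le_of_le_one_left (abs_nonneg _) ((div_le_one hu).2 hyu)

/-- The closed region between the horizontal axis and the graph of `f` over `s`; the library's
`regionBetween` is the version with both strict inequalities. -/
def closedSubgraph (f : ℝ → ℝ) (s : Set ℝ) : Set (ℝ × ℝ) :=
  {p | p.1 ∈ s ∧ 0 ≤ p.2 ∧ p.2 ≤ f p.1}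

/-- The height over the midpoint of `p.1` and `q.1` whose height relative to `f` is the average of
those of `p` and `q`. In the paper's notation, `y₀ + ỹ` is the case `p = (x₀, y₀)`,
`q = (x₁, y₀ + (x₁ - x₀) / 2)`. It is meaningful only where `f p.1` and `f q.1` are nonzero. -/
noncomputable def fibreMidpoint (f : ℝ → ℝ) (p q : ℝ × ℝ) : ℝ :=
  (1 / 2) * (p.2 / f p.1 + q.2 / f q.1) * f ((p.1 + q.1) / 2)

section Subgraph

variable {f : ℝ → ℝ} {s : Set ℝ} {K : ℝ≥0}

lemma abs_fibreMidpoint_sub_average_le {p q : ℝ × ℝ} (hp : p ∈ closedSubgraph f s)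
    (hq : q ∈ closedSubgraph f s) (hfp : 0 < f p.1) (hfq : 0 < f q.1) :
    |fibreMidpoint f p q - (p.2 + q.2) / 2| ≤
      (|f ((p.1 + q.1) / 2) - f p.1| + |f ((p.1 + q.1) / 2) - f q.1|) / 2 := by
  set m := f ((p.1 + q.1) / 2)
  have h_split : fibreMidpoint f p q - (p.2 + q.2) / 2 =
      ((p.2 / f p.1 * m - p.2) + (q.2 / f q.1 * m - q.2)) / 2 := by
    unfold fibreMidpoint; ring
  rw [h_split, abs_div, abs_two]
  gcongr
  exact (abs_add_le _ _).trans (add_le_add (abs_div_mul_sub_self_le hp.2.1 hp.2.2 hfp m)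
    (abs_div_mul_sub_self_le hq.2.1 hq.2.2 hfq m))

lemma abs_apply_midpoint_sub_le [s.OrdConnected] (hf : LipschitzOnWith K f s) {a b : ℝ}
    (ha : a ∈ s) (hb : b ∈ s) (hab : a ≤ b) :
    |f ((a + b) / 2) - f a| ≤ K * ((b - a) / 2) ∧ |f ((a + b) / 2) - f b| ≤ K * ((b - a) / 2) := by
  have h_mid : (a + b) / 2 ∈ s := s.Icc_subset ha hb ⟨by linarith, by linarith⟩
  have h_left : |(a + b) / 2 - a| = (b - a) / 2 := by
    rw [abs_of_nonneg (by linarith)]; ring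
  have h_right : |(a + b) / 2 - b| = (b - a) / 2 := by
    rw [abs_of_nonpos (by linarith)]; ring
  exact ⟨h_left ▸ hf.dist_le_mul _ h_mid _ ha, h_right ▸ hf.dist_le_mul _ h_mid _ hb⟩

lemma abs_fibreMidpoint_sub_average_le_of_lipschitzOnWith [s.OrdConnected]
    (hf : LipschitzOnWith K f s) {p q : ℝ × ℝ} (hp : p ∈ closedSubgraph f s)
    (hq : q ∈ closedSubgraph f s) (hfp : 0 < f p.1) (hfq : 0 < f q.1) (hpq : p.1 ≤ q.1) :
    |fibreMidpoint f p q - (p.2 + q.2) / 2| ≤ K * ((q.1 - p.1) / 2) := by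
  obtain ⟨h_left, h_right⟩ := abs_apply_midpoint_sub_le hf hp.1 hq.1 hpq
  linarith [abs_fibreMidpoint_sub_average_le hp hq hfp hfq]

end Subgraph

lemma interpolated_rise_mem_Icc {L r δ t : ℝ} (hr : 0 ≤ r) (hrL : r ≤ L - δ) (hδ : 0 ≤ δ)
    (ht : t ∈ Icc (0 : ℝ) 1) :
    r + (L - r) * t ∈ Icc 0 L ∧ (1 + t) * L - (r + (L - r) * t) ∈ Icc δ L := by
  have h_gap_nonneg : 0 ≤ (L - r) * t := mul_nonneg (by linarith) ht.1
  have h_gap_le : (L - r) * t ≤ L - r := mul_le_of_le_one_right (by linarith) ht.2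
  have h_rise_nonneg : 0 ≤ r * (1 - t) := mul_nonneg hr (by linarith [ht.2])
  have h_rise_le : r * (1 - t) ≤ r := mul_le_of_le_one_right hr (by linarith [ht.1])
  refine ⟨⟨?_, ?_⟩, ?_, ?_⟩ <;> linarith

lemma slope_parameter_mem_Icc_and_mul_eq {d w : ℝ} (hw : 0 < w) (hlow : (1 / 2) * w ≤ d)
    (hup : d ≤ w) :
    2 * d / w - 1 ∈ Icc (0 : ℝ) 1 ∧ (1 + (2 * d / w - 1)) * (w / 2) = d := by
  refine ⟨⟨?_, ?_⟩, ?_⟩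
  · rw [sub_nonneg, one_le_div hw]; linarith
  · rw [sub_le_iff_le_add, div_le_iff₀ hw]; linarith
  · field_simp; ring

theorem stmt_10_general {s : Set ℝ} [s.OrdConnected] {f : ℝ → ℝ}
    (hf : LipschitzOnWith (1 / 4) f s) {x₀ y₀ x₁ y₁ : ℝ} (h₀ : (x₀, y₀) ∈ closedSubgraph f s)
    (h₁ : (x₁, y₁) ∈ closedSubgraph f s) (hfx₀ : 0 < f x₀) (hx : x₀ < x₁)
    (hlow : (1 / 2) * (x₁ - x₀) ≤ y₁ - y₀) (hup : y₁ - y₀ ≤ x₁ - x₀) {ytilde ybar : ℝ}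
    (hytilde : ytilde =
      (1 / 2) * (y₀ / f x₀ + (y₀ + (x₁ - x₀) / 2) / f x₁) * f ((x₀ + x₁) / 2) - y₀)
    (hybar : ybar =
      y₀ + ytilde + ((x₁ - x₀) / 2 - ytilde) * (2 * (y₁ - y₀) / (x₁ - x₀) - 1)) :
    ((x₀ + x₁) / 2, ybar) ∈ closedSubgraph f s ∧
      dist ((x₀ + x₁) / 2, ybar) (x₀, y₀) = (1 / 2) * dist (x₀, y₀) (x₁, y₁) ∧
      dist ((x₀ + x₁) / 2, ybar) (x₁, y₁) = (1 / 2) * dist (x₀, y₀) (x₁, y₁) ∧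
      dist (x₀, y₀) (x₁, y₁) = x₁ - x₀ := by
  set L := (x₁ - x₀) / 2 with hL
  set t := 2 * (y₁ - y₀) / (x₁ - x₀) - 1
  obtain ⟨ht, hy₁⟩ : t ∈ Icc 0 1 ∧ (1 + t) * L = y₁ - y₀ :=
    slope_parameter_mem_Icc_and_mul_eq (sub_pos.2 hx) hlow hup
  have hy₀ : 0 ≤ y₀ := h₀.2.1
  have hy₁f : y₁ ≤ f x₁ := h₁.2.2
  have hytilde_near : |ytilde - L / 2| ≤ 1 / 4 * L := by
    have hq : (x₁, y₀ + L) ∈ closedSubgraph f s := ⟨h₁.1, by linarith, by linarith⟩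
    have h_average := abs_fibreMidpoint_sub_average_le_of_lipschitzOnWith hf h₀ hq hfx₀
      (by linarith) hx.le
    convert h_average using 2
    · rw [hytilde, fibreMidpoint]; ring
    · norm_num
  obtain ⟨hytilde_ge, hytilde_le⟩ := abs_le.1 hytilde_near
  obtain ⟨⟨h_rise_nonneg, h_rise_le⟩, h_drop_ge, h_drop_le⟩ :=
    interpolated_rise_mem_Icc (L := L) (δ := 1 / 4 * L) (r := ytilde)
      (by linarith) (by linarith) (by linarith) ht
  have h_mid_ge : f x₁ - 1 / 4 * L ≤ f ((x₀ + x₁) / 2) := by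
    have h_lip := (abs_le.1 (abs_apply_midpoint_sub_le hf h₀.1 h₁.1 hx.le).2).1
    push_cast at h_lip
    linarith
  have h_mem : ((x₀ + x₁) / 2, ybar) ∈ closedSubgraph f s :=
    ⟨s.Icc_subset h₀.1 h₁.1 ⟨by linarith, by linarith⟩, by linarith, by linarith⟩
  exact ⟨h_mem, dist_midpoint_eq_half (abs_le.2 ⟨by linarith, by linarith⟩)
    (abs_le.2 ⟨by linarith, by linarith⟩)⟩

theorem stmt_10 :
    ∃ k₀ > (0 : ℝ), ∀ ε k : ℝ, 0 < ε → ε < k → k < k₀ →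
    ∀ φ : ℝ → ℝ, Continuous φ → (∀ x, 0 ≤ φ x) → (∀ x, φ x ≤ 1) →
      (∀ x, x ∉ Set.Icc (-k) k → φ x = 0) → (∫ x, φ x) = k →
    ∀ f f' : ℝ → ℝ, (∀ x, HasDerivAt f (f' x) x) → (∀ x, HasDerivAt f' (φ x) x) →
      f' (-1) = 0 → f (-1) = ε →
    ∀ X : Set (ℝ × ℝ),
      X = {p : ℝ × ℝ | p.1 ∈ Set.Icc (-1 : ℝ) 1 ∧ 0 ≤ p.2 ∧ p.2 ≤ f p.1} →
    ∀ x₀ y₀ x₁ y₁ : ℝ, (x₀, y₀) ∈ X → (x₁, y₁) ∈ X → x₀ < x₁ →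
      (1 / 2) * (x₁ - x₀) < y₁ - y₀ → y₁ - y₀ < x₁ - x₀ →
    ∀ ytilde ybar : ℝ,
      ytilde = (1 / 2) * (y₀ / f x₀ + (y₀ + (x₁ - x₀) / 2) / f x₁) * f ((x₀ + x₁) / 2) - y₀ →
      ybar = y₀ + ytilde + ((x₁ - x₀) / 2 - ytilde) * (2 * (y₁ - y₀) / (x₁ - x₀) - 1) →
    ((((x₀ + x₁) / 2 : ℝ), ybar) ∈ X ∧
      dist (((x₀ + x₁) / 2 : ℝ), ybar) ((x₀, y₀) : ℝ × ℝ) =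
        (1 / 2) * dist ((x₀, y₀) : ℝ × ℝ) ((x₁, y₁) : ℝ × ℝ) ∧
      dist (((x₀ + x₁) / 2 : ℝ), ybar) ((x₁, y₁) : ℝ × ℝ) =
        (1 / 2) * dist ((x₀, y₀) : ℝ × ℝ) ((x₁, y₁) : ℝ × ℝ) ∧
      dist ((x₀, y₀) : ℝ × ℝ) ((x₁, y₁) : ℝ × ℝ) = x₁ - x₀) := by
  refine ⟨1 / 4, by norm_num, ?_⟩
  rintro ε k hε hεk hk φ - hφ - - hφk f f' hf hf' hf'0 hf0 X rfl
    x₀ y₀ x₁ y₁ h₀ h₁ hx hlow hup ytilde ybar hytilde hybar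
  have hφi : Integrable φ := .of_integral_ne_zero (hφk ▸ (hε.trans hεk).ne')
  have hf_lip : LipschitzOnWith (1 / 4) f (Icc (-1) 1) :=
    ((lipschitzOnWith_Ici_of_integrable_second_deriv hf hf' hφ hφi hf'0).mono
      Icc_subset_Ici_self).weaken (Real.toNNReal_le_iff_le_coe.2 (by simpa [hφk] using hk.le))
  have hfx₀ : 0 < f x₀ := hε.trans_le (hf0 ▸
    monotoneOn_Ici_of_second_deriv_nonneg hf hf' hφ hf'0 self_mem_Ici h₀.1.1 h₀.1.1)
  exact stmt_10_general hf_lip h₀ h₁ hfx₀ hx hlow.le hup.le hytilde hybar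
end
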